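/- arXiv:1005.0681 — 7 statements merged into one kernel-verified Lean document; each statement's English description precedes it below -/
import Mathlib

section
/- Let R be a finite subgroup of O(3) with R not contained in SO(3), and suppose pr(R) is conjugate in O(3) to Z_n. If n is odd, then R is conjugate in O(3) to Z_n × Z. If n is even, then R is conjugate in O(3) to Z_n × Z or to the cyclic group ⟨−a_n⟩ generated by −a_n. -/
/-! The determinant of an orthogonal matrix is `±1`, so every `B ∈ R` satisfies `pr B = ±B`.
After conjugating `R` one may assume `pr(R) = Z_n = ⟨a⟩`, where `a = a_n`.

If `-1 ∈ R`, then `R` is closed under negation and hence `R = pr(R) × Z = Z_n × Z`.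

If `-1 ∉ R`, then `R` never contains both `B` and `-B`. Choose `A ∈ R` with `pr A = a`, so `A = ±a`.
If `A = a`, then `R` contains `Z_n`; an element `B ∈ R` of determinant `-1` gives
`-B = pr B ∈ Z_n ⊆ R`, which is impossible. So `A = -a`; every `B ∈ R` is `±a^k = ±A^k` for some
`k`, and the sign forces `B = A^k`, so `R = ⟨-a⟩`. Moreover `n` is even, since for odd `n`
one would have `A^n = -a^n = -1 ∈ R`. -/

/-! Setup: `O(3)` is the group of 3×3 real orthogonal matrices, `SO(3)` the subgroup of
determinant-one matrices, and `pr : O(3) → SO(3)`, `A ↦ det A · A` (kernel `Z = {±1}`).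
Subgroups of `O(3)` are modelled as subsets of the matrix ring that contain `1`, are
closed under multiplication and under transpose (which is the inverse in `O(3)`). -/

noncomputable section
open Matrix

abbrev M3 : Type := Matrix (Fin 3) (Fin 3) ℝ

/-- The set of orthogonal 3×3 real matrices. -/
def O3 : Set M3 := {A : M3 | A * Aᵀ = 1 ∧ Aᵀ * A = 1}

/-- The set of special orthogonal 3×3 real matrices. -/
def SO3 : Set M3 := {A : M3 | A ∈ O3 ∧ A.det = 1}

/-- `R` is a subgroup of `O(3)` (inverses in `O(3)` are transposes). -/
structure IsSubgroupO3 (R : Set M3) : Prop where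
  subset_O3 : R ⊆ O3
  one_mem : (1 : M3) ∈ R
  mul_mem : ∀ ⦃A B : M3⦄, A ∈ R → B ∈ R → A * B ∈ R
  transpose_mem : ∀ ⦃A : M3⦄, A ∈ R → Aᵀ ∈ R

/-- The homomorphism `pr : O(3) → SO(3)`, `A ↦ det A • A`. -/
def pr (A : M3) : M3 := A.det • A

/-- The image `pr(R)`. -/
def prS (R : Set M3) : Set M3 := pr '' R

/-- Two subsets of `O(3)` are conjugate in `O(3)`. -/
def ConjO3 (R S : Set M3) : Prop := ∃ P ∈ O3, S = (fun A => P * A * Pᵀ) '' R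

/-- The subgroup of `O(3)` generated by a subset.  (For subsets of `O(3)` that are closed
under inverses -- in particular finite-order generators or inverse-closed sets -- the
submonoid closure coincides with the generated subgroup.) -/
def gen (S : Set M3) : Set M3 := (Submonoid.closure S : Set M3)

/-- `K × Z = {±g : g ∈ K}`, the internal direct product with the center `Z = {1, -1}`. -/
def prodZ (K : Set M3) : Set M3 := K ∪ (fun A : M3 => -A) '' K

/-- The rotation through angle `θ` around the `z`-axis. -/
def rotZ (θ : ℝ) : M3 :=
  !![Real.cos θ, -Real.sin θ, 0; Real.sin θ, Real.cos θ, 0; 0, 0, 1]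

/-- `a_n`: the rotation through `2π/n` around the `z`-axis. -/
def aRot (n : ℕ) : M3 := rotZ (2 * Real.pi / n)

/-- `b`: the rotation through `π` around the `x`-axis. -/
def bRot : M3 := !![1, 0, 0; 0, -1, 0; 0, 0, -1]

/-- `Z_n = ⟨a_n⟩`. -/
def cyclicZ (n : ℕ) : Set M3 := gen {aRot n}

/-- `D_n = ⟨a_n, b⟩`. -/
def dihedralD (n : ℕ) : Set M3 := gen {aRot n, bRot}

lemma rotZ_pow (θ : ℝ) (k : ℕ) : rotZ θ ^ k = rotZ (k * θ) := by
  induction k with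
  | zero => ext i j; fin_cases i <;> fin_cases j <;> simp [rotZ]
  | succ k ih =>
    rw [pow_succ, ih]
    have h : ((k + 1 : ℕ) : ℝ) * θ = k * θ + θ := by push_cast; ring
    rw [h]
    ext i j
    fin_cases i <;> fin_cases j <;>
      simp [rotZ, Matrix.mul_apply, Fin.sum_univ_three, Real.cos_add, Real.sin_add] <;> ring

lemma aRot_pow_self (n : ℕ) (hn : 0 < n) : aRot n ^ n = 1 := by
  have hn' : (n : ℝ) ≠ 0 := by positivity
  have h : (n : ℝ) * (2 * Real.pi / n) = 2 * Real.pi := by field_simp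
  rw [aRot, rotZ_pow, h]
  ext i j
  fin_cases i <;> fin_cases j <;> simp [rotZ]

lemma det_of_mem_O3 {A : M3} (h : A ∈ O3) : A.det = 1 ∨ A.det = -1 := by
  have h1 := congrArg Matrix.det h.1
  rw [Matrix.det_mul, Matrix.det_transpose, Matrix.det_one] at h1
  exact mul_self_eq_one_iff.mp h1

lemma mem_gen_singleton {a B : M3} : B ∈ gen {a} ↔ ∃ k : ℕ, a ^ k = B :=
  Submonoid.mem_closure_singleton

lemma IsSubgroupO3.pow_mem {S : Set M3} (hS : IsSubgroupO3 S) {A : M3} (hA : A ∈ S) (k : ℕ) :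
    A ^ k ∈ S := by
  induction k with
  | zero => simpa using hS.one_mem
  | succ k ih => rw [pow_succ]; exact hS.mul_mem ih hA

lemma IsSubgroupO3.neg_one_mem {S : Set M3} (hS : IsSubgroupO3 S) {A : M3} (hA : A ∈ S)
    (hA' : -A ∈ S) : (-1 : M3) ∈ S := by
  have h := hS.mul_mem hA' (hS.transpose_mem hA)
  rwa [neg_mul, (hS.subset_O3 hA).1] at h

lemma IsSubgroupO3.conj {R : Set M3} (hR : IsSubgroupO3 R) {P : M3} (hP : P ∈ O3) :
    IsSubgroupO3 ((fun A => P * A * Pᵀ) '' R) := by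
  have key : ∀ A B : M3, (P * A * Pᵀ) * (P * B * Pᵀ) = P * (A * B) * Pᵀ := fun A B => by
    calc (P * A * Pᵀ) * (P * B * Pᵀ) = P * A * (Pᵀ * P) * B * Pᵀ := by simp only [mul_assoc]
      _ = P * (A * B) * Pᵀ := by rw [hP.2]; simp only [mul_assoc, one_mul]
  have htr : ∀ A : M3, (P * A * Pᵀ)ᵀ = P * Aᵀ * Pᵀ := fun A => by
    simp [Matrix.transpose_mul, mul_assoc]
  refine ⟨?_, ⟨1, hR.one_mem, by simpa using hP.1⟩, ?_, ?_⟩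
  · rintro _ ⟨A, hA, rfl⟩
    have hA' := hR.subset_O3 hA
    refine ⟨?_, ?_⟩ <;> dsimp only <;> rw [htr, key]
    · rw [hA'.1, mul_one, hP.1]
    · rw [hA'.2, mul_one, hP.1]
  · rintro _ _ ⟨A, hA, rfl⟩ ⟨B, hB, rfl⟩
    exact ⟨A * B, hR.mul_mem hA hB, (key A B).symm⟩
  · rintro _ ⟨A, hA, rfl⟩
    exact ⟨Aᵀ, hR.transpose_mem hA, (htr A).symm⟩

lemma det_conj {P : M3} (hP : P ∈ O3) (A : M3) : (P * A * Pᵀ).det = A.det := by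
  have h := congrArg Matrix.det hP.1
  rw [Matrix.det_mul, Matrix.det_one] at h
  rw [Matrix.det_mul, Matrix.det_mul, mul_right_comm, h, one_mul]

lemma pr_conj {P : M3} (hP : P ∈ O3) (A : M3) : pr (P * A * Pᵀ) = P * pr A * Pᵀ := by
  rw [pr, det_conj hP, pr]
  simp

/-- The classification when `pr(S)` is equal to `Z_n`, so that no conjugation is needed. -/
lemma eq_of_prS_eq {S : Set M3} (hS : IsSubgroupO3 S) {n : ℕ} (hn : 0 < n)
    (hdet : ∃ B ∈ S, B.det = -1) (h : cyclicZ n = prS S) :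
    S = prodZ (cyclicZ n) ∨ (Even n ∧ S = gen {-(aRot n)}) := by
  have hpr : ∀ B ∈ S, pr B = B ∨ pr B = -B := fun B hB => by
    rcases det_of_mem_O3 (hS.subset_O3 hB) with hd | hd <;> simp [pr, hd]
  have hmem : ∀ B ∈ S, pr B ∈ cyclicZ n := fun B hB => by rw [h]; exact ⟨B, hB, rfl⟩
  by_cases hneg : (-1 : M3) ∈ S
  · left
    have hnegS : ∀ B ∈ S, -B ∈ S := fun B hB => by simpa using hS.mul_mem hneg hB
    have hsub : cyclicZ n ⊆ S := by
      rw [h]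
      rintro _ ⟨A, hA, rfl⟩
      rcases hpr A hA with e | e <;> rw [e]
      exacts [hA, hnegS A hA]
    apply Set.Subset.antisymm
    · intro B hB
      have hB' := hmem B hB
      rcases hpr B hB with e | e <;> rw [e] at hB'
      · exact Or.inl hB'
      · exact Or.inr ⟨-B, hB', neg_neg B⟩
    · rintro _ (hB | ⟨B, hB, rfl⟩)
      exacts [hsub hB, hnegS B (hsub hB)]
  · right
    obtain ⟨A, hA, hAa⟩ : aRot n ∈ prS S := by
      rw [← h]; exact Submonoid.subset_closure rfl
    have hA' : -aRot n ∈ S := by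
      rcases hpr A hA with e | e
      · exfalso
        have ha : aRot n ∈ S := by rwa [← hAa, e]
        obtain ⟨B, hB, hd⟩ := hdet
        obtain ⟨k, hk⟩ := mem_gen_singleton.mp (hmem B hB)
        refine hneg (hS.neg_one_mem hB ?_)
        have hB' := hS.pow_mem ha k
        rw [hk] at hB'
        simpa [pr, hd] using hB'
      · rwa [← hAa, e, neg_neg]
    refine ⟨?_, Set.Subset.antisymm ?_ ?_⟩
    · by_contra hodd
      have hp := hS.pow_mem hA' n
      rw [(Nat.not_even_iff_odd.mp hodd).neg_pow, aRot_pow_self n hn] at hp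
      exact hneg hp
    · intro B hB
      obtain ⟨k, hk⟩ := mem_gen_singleton.mp (hmem B hB)
      refine mem_gen_singleton.mpr ⟨k, ?_⟩
      have hk' := hS.pow_mem hA' k
      have hcases : (-aRot n) ^ k = B ∨ (-aRot n) ^ k = -B := by
        rcases Nat.even_or_odd k with hp | hp <;> rw [hp.neg_pow, hk] <;>
          rcases hpr B hB with e | e <;> simp [e]
      rcases hcases with e | e
      · exact e
      · exact absurd (hS.neg_one_mem hB (e ▸ hk')) hneg
    · intro B hB
      obtain ⟨k, rfl⟩ := mem_gen_singleton.mp hB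
      exact hS.pow_mem hA' k

/-- Let `R` be a finite subgroup of `O(3)` not contained in `SO(3)`,
and suppose `pr(R)` is conjugate in `O(3)` to `Z_n`.  If `n` is odd then `R` is conjugate
in `O(3)` to `Z_n × Z`; if `n` is even then `R` is conjugate in `O(3)` to `Z_n × Z` or to
`⟨-a_n⟩`. -/
theorem statement1 (R : Set M3) (hR : IsSubgroupO3 R) (hfin : R.Finite)
    (hnotrot : ¬ R ⊆ SO3) (n : ℕ) (hn : 0 < n)
    (hconj : ConjO3 (prS R) (cyclicZ n)) :
    (Odd n → ConjO3 R (prodZ (cyclicZ n))) ∧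
    (Even n → ConjO3 R (prodZ (cyclicZ n)) ∨ ConjO3 R (gen {-(aRot n)})) := by
  obtain ⟨P, hP, h⟩ := hconj
  obtain ⟨B, hB, hBn⟩ := Set.not_subset.mp hnotrot
  have hd : B.det = -1 := by
    have hO := hR.subset_O3 hB
    exact (det_of_mem_O3 hO).resolve_left fun h1 => hBn ⟨hO, h1⟩
  have h' : cyclicZ n = prS ((fun A => P * A * Pᵀ) '' R) := by
    rw [h, prS, prS, Set.image_image, Set.image_image]
    exact Set.image_congr fun A _ => (pr_conj hP A).symm
  have hd' : (P * B * Pᵀ).det = -1 := by rw [det_conj hP, hd]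
  rcases eq_of_prS_eq (hR.conj hP) hn ⟨_, ⟨B, hB, rfl⟩, hd'⟩ h' with e | ⟨hev, e⟩
  · exact ⟨fun _ => ⟨P, hP, e.symm⟩, fun _ => Or.inl ⟨P, hP, e.symm⟩⟩
  · exact ⟨fun ho => absurd hev (Nat.not_even_iff_odd.mpr ho), fun _ => Or.inr ⟨P, hP, e.symm⟩⟩
end
end

section
/- Let R be a finite subgroup of O(3) with R not contained in SO(3), and suppose pr(R) is conjugate in O(3) to the tetrahedral group T. Then R is conjugate in O(3) to T × Z = {±g : g ∈ T}. -/
/-! A set `S` of matrices conjugate to `R` satisfies `S ⊆ ±T`, and for every `g ∈ T` at least one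
of `g`, `-g` lies in `S`.  So everything reduces to `-1 ∈ S`.  If `g ∈ T` has `g³ = 1` and
`-g ∈ S`, then `-1 = (-g)³ ∈ S`.  Fix the rotation `c ∈ T` of order three permuting the
coordinates cyclically.  The group `T / V₄` has order three and is generated by the class of `c`,
so for `g ∈ T` either `g³ = 1` or `g ∈ V₄` and then `(g c)³ = 1` (`tetra_cube`).
Since `R` contains an element of determinant `-1`, there is some `g ∈ T` with `-g ∈ S`.  Now either
`-c ∈ S`, giving `-1 = (-c)³`, or `c ∈ S`, and one of `-g`, `-g c` is an element of `S`
with cube `-1`. -/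

/-! Setup: `O(3)` is the group of 3×3 real orthogonal matrices, `SO(3)` the subgroup of
determinant-one matrices, and `pr : O(3) → SO(3)`, `A ↦ det A · A` (kernel `Z = {±1}`).
Subgroups of `O(3)` are modelled as subsets of the matrix ring that contain `1`, are
closed under multiplication and under transpose (which is the inverse in `O(3)`). -/

noncomputable section
open Matrix

/-- The vertex set of the regular tetrahedron. -/
def vT : Set (Fin 3 → ℝ) :=
  {![1/3, 1/3, 1/3], ![-1/3, -1/3, 1/3], ![-1/3, 1/3, -1/3], ![1/3, -1/3, -1/3]}

/-- The tetrahedral group `T`, i.e. the rotations preserving the tetrahedron. -/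
def tetra : Set M3 := {g : M3 | g ∈ SO3 ∧ (fun v => g.mulVec v) '' vT = vT}


/-- The rotation of order three `(x, y, z) ↦ (y, z, x)`. -/
def cyc : M3 := !![0, 1, 0; 0, 0, 1; 1, 0, 0]

lemma cyc_cube : cyc * cyc * cyc = 1 := by
  ext i j
  fin_cases i <;> fin_cases j <;> simp [cyc, Matrix.mul_apply, Fin.sum_univ_three]

lemma cyc_mem : cyc ∈ tetra := by
  refine ⟨⟨⟨?_, ?_⟩, ?_⟩, ?_⟩
  · ext i j
    fin_cases i <;> fin_cases j <;> simp [cyc, Matrix.mul_apply, Fin.sum_univ_three]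
  · ext i j
    fin_cases i <;> fin_cases j <;> simp [cyc, Matrix.mul_apply, Fin.sum_univ_three]
  · simp [cyc, Matrix.det_fin_three]
  · have h (x y z : ℝ) : cyc.mulVec ![x, y, z] = ![y, z, x] := by
      ext i
      fin_cases i <;> simp [cyc, Matrix.mulVec, dotProduct, Fin.sum_univ_three]
    simp only [vT, Set.image_insert_eq, Set.image_singleton, h]
    ext v
    simp only [Set.mem_insert_iff, Set.mem_singleton_iff]
    tauto

/-- The images of three vertices determine `g`, which leaves 64 candidates; the determinant
condition discards all but twelve of them, and these are checked one by one. -/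
lemma tetra_cube {g : M3} (hg : g ∈ tetra) :
    g * g * g = 1 ∨ (g * cyc) * (g * cyc) * (g * cyc) = 1 := by
  obtain ⟨⟨-, hdet⟩, him⟩ := hg
  have key : ∀ v ∈ vT, g.mulVec v ∈ vT := fun v hv => him ▸ Set.mem_image_of_mem _ hv
  have h1 := key ![-1/3, -1/3, 1/3] (by simp [vT])
  have h2 := key ![-1/3, 1/3, -1/3] (by simp [vT])
  have h3 := key ![1/3, -1/3, -1/3] (by simp [vT])
  obtain ⟨a, b, c, d, e, f, p, q, r, rfl⟩ :
      ∃ a b c d e f p q r : ℝ, g = !![a, b, c; d, e, f; p, q, r] :=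
    ⟨_, _, _, _, _, _, _, _, _, Matrix.eta_fin_three g⟩
  have hv (x y z : ℝ) : (!![a, b, c; d, e, f; p, q, r] : M3).mulVec ![x, y, z]
      = ![a * x + b * y + c * z, d * x + e * y + f * z, p * x + q * y + r * z] := by
    ext i
    fin_cases i <;> simp [Matrix.mulVec, dotProduct, Fin.sum_univ_three]
  have inj (x y z x' y' z' : ℝ) : (![x, y, z] : Fin 3 → ℝ) = ![x', y', z'] ↔
      x = x' ∧ y = y' ∧ z = z' := by
    simp
  rw [hv] at h1 h2 h3
  simp only [vT, Set.mem_insert_iff, Set.mem_singleton_iff, inj] at h1 h2 h3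
  rw [Matrix.det_fin_three] at hdet
  simp at hdet
  -- The standard basis vectors are `-3/2` times the pairwise sums of these three vertices.
  have solve (x y z s t u : ℝ) (k1 : x * (-1/3) + y * (-1/3) + z * (1/3) = s)
      (k2 : x * (-1/3) + y * (1/3) + z * (-1/3) = t)
      (k3 : x * (1/3) + y * (-1/3) + z * (-1/3) = u) :
      x = -3/2 * (s + t) ∧ y = -3/2 * (s + u) ∧ z = -3/2 * (t + u) := by
    refine ⟨?_, ?_, ?_⟩ <;> linarith
  rcases h1 with ⟨a1, a2, a3⟩ | ⟨a1, a2, a3⟩ | ⟨a1, a2, a3⟩ | ⟨a1, a2, a3⟩ <;>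
  rcases h2 with ⟨b1, b2, b3⟩ | ⟨b1, b2, b3⟩ | ⟨b1, b2, b3⟩ | ⟨b1, b2, b3⟩ <;>
  rcases h3 with ⟨c1, c2, c3⟩ | ⟨c1, c2, c3⟩ | ⟨c1, c2, c3⟩ | ⟨c1, c2, c3⟩ <;>
  · obtain ⟨rfl, rfl, rfl⟩ := solve _ _ _ _ _ _ a1 b1 c1
    obtain ⟨rfl, rfl, rfl⟩ := solve _ _ _ _ _ _ a2 b2 c2
    obtain ⟨rfl, rfl, rfl⟩ := solve _ _ _ _ _ _ a3 b3 c3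
    clear a1 a2 a3 b1 b2 b3 c1 c2 c3 hv inj solve key him
    first
    | (exfalso; norm_num at hdet; done)
    | (left
       norm_num
       exact Matrix.one_fin_three.symm)
    | (right
       norm_num [cyc]
       exact Matrix.one_fin_three.symm)

/-- Let `R` be a finite subgroup of `O(3)` not contained in `SO(3)`,
and suppose `pr(R)` is conjugate in `O(3)` to the tetrahedral group `T`.  Then `R` is
conjugate in `O(3)` to `T × Z = {±g : g ∈ T}`. -/
theorem statement3 (R : Set M3) (hR : IsSubgroupO3 R) (hfin : R.Finite)
    (hnotrot : ¬ R ⊆ SO3) (hconj : ConjO3 (prS R) tetra) :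
    ConjO3 R (prodZ tetra) := by
  obtain ⟨P, hP, hT⟩ := hconj
  refine ⟨P, hP, ?_⟩
  set S : Set M3 := (fun A => P * A * Pᵀ) '' R with hS
  have hmul : ∀ {A B : M3}, A ∈ S → B ∈ S → A * B ∈ S := by
    rintro _ _ ⟨A, hA, rfl⟩ ⟨B, hB, rfl⟩
    refine ⟨A * B, hR.mul_mem hA hB, ?_⟩
    calc P * (A * B) * Pᵀ = P * A * 1 * B * Pᵀ := by simp only [mul_assoc, one_mul]
      _ = P * A * Pᵀ * (P * B * Pᵀ) := by rw [← hP.2]; simp only [mul_assoc]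
  have hdet : ∀ A ∈ R, A.det = 1 ∨ A.det = -1 := by
    intro A hA
    have h := congrArg Matrix.det (hR.subset_O3 hA).1
    rw [Matrix.det_mul, Matrix.det_transpose, Matrix.det_one] at h
    exact mul_self_eq_one_iff.mp h
  have hsign : ∀ g ∈ tetra, g ∈ S ∨ -g ∈ S := by
    intro g hg
    rw [hT] at hg
    obtain ⟨_, ⟨A, hA, rfl⟩, rfl⟩ := hg
    rcases hdet A hA with h | h
    · exact Or.inl ⟨A, hA, by simp [pr, h]⟩
    · exact Or.inr ⟨A, hA, by simp [pr, h]⟩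
  have hcube : ∀ {g : M3}, g * g * g = 1 → -g ∈ S → (-1 : M3) ∈ S := by
    intro g h hg
    have h' := hmul (hmul hg hg) hg
    rwa [neg_mul_neg, mul_neg, h] at h'
  have hneg : (-1 : M3) ∈ S := by
    obtain ⟨A, hA, hAn⟩ := Set.not_subset.mp hnotrot
    have hAdet : A.det = -1 :=
      (hdet A hA).resolve_left fun h => hAn ⟨hR.subset_O3 hA, h⟩
    have hg : -(P * A * Pᵀ) ∈ tetra := by
      rw [hT]
      exact ⟨_, ⟨A, hA, rfl⟩, by simp [pr, hAdet]⟩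
    have hgS : -(-(P * A * Pᵀ)) ∈ S := by
      rw [neg_neg]
      exact ⟨A, hA, rfl⟩
    rcases hsign cyc cyc_mem with hc | hc
    · rcases tetra_cube hg with h | h
      · exact hcube h hgS
      · refine hcube h ?_
        rw [← neg_mul]
        exact hmul hgS hc
    · exact hcube cyc_cube hc
  have hnegmem : ∀ {A : M3}, A ∈ S → -A ∈ S := fun {A} hA => by
    simpa using hmul hneg hA
  ext g
  constructor
  · rintro (hg | ⟨g, hg, rfl⟩)
    · rcases hsign g hg with h | h
      · exact h
      · simpa using hnegmem h
    · rcases hsign g hg with h | h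
      · exact hnegmem h
      · exact h
  · rintro ⟨A, hA, rfl⟩
    have hAT : P * pr A * Pᵀ ∈ tetra := by
      rw [hT]
      exact ⟨_, ⟨A, hA, rfl⟩, rfl⟩
    rcases hdet A hA with h | h
    · left
      simpa [pr, h] using hAT
    · right
      exact ⟨_, hAT, by simp [pr, h]⟩
end
end

section
/- Let R be a closed infinite subgroup of O(3) (equivalently, a closed subgroup of positive dimension) with R not contained in SO(3). (1) If pr(R) is conjugate in O(3) to SO(2), then R is conjugate in O(3) to SO(2) × Z, and moreover SO(2) × Z = ⟨SO(2), −a₂⟩. (2) If pr(R) is conjugate in O(3) to O(2), then R is conjugate in O(3) to ⟨SO(2), −b⟩ or to O(2) × Z. (3) If pr(R) is conjugate in O(3) to SO(3), then R = O(3). -/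
/-!
The argument rests on squares. If `Y = pr A` with `A ∈ R`, then `Y * Y = A * A`, because
`det A = ±1`; so `R` contains the square of every element of `pr R` (`sq_mem`). Conjugating, one may
assume that `pr R` is equal to `SO(2)`, `O(2)` or `SO(3)`.

Every element of `SO(2)` is a square in `SO(2)`. Every element of `SO(3)` is a product of a half-turn
and a rotation about the `z`-axis (`exists_halfTurn_mul_rotZ`), and both factors are squares in
`SO(3)`. Hence `pr R ⊆ R` in cases (1) and (3). As `R` has an element `A` of determinant `-1`, it
then contains `-A = pr A` and so `-1` (`neg_one_mem`), and `R = pr R × Z` (`eq_prodZ`).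

In case (2) one only gets `SO(2) ⊆ R`, and `O(2) = SO(2) ∪ SO(2) b`. If `b ∈ R`, then `O(2) ⊆ R` and
`R = O(2) × Z` as before. If not, then `-b ∈ R`, hence `-1 ∉ R`, and the only elements of `R` are
those of `SO(2) ∪ SO(2)(-b) = ⟨SO(2), -b⟩`.
-/

/-! Setup: `O(3)` is the group of 3×3 real orthogonal matrices, `SO(3)` the subgroup of
determinant-one matrices, and `pr : O(3) → SO(3)`, `A ↦ det A · A` (kernel `Z = {±1}`).
Subgroups of `O(3)` are modelled as subsets of the matrix ring that contain `1`, are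
closed under multiplication and under transpose (which is the inverse in `O(3)`). -/

noncomputable section
open Matrix

/-- `SO(2)`: the rotations around the `z`-axis. -/
def so2 : Set M3 := Set.range rotZ

/-- `O(2) = ⟨SO(2), b⟩`. -/
def o2 : Set M3 := gen (so2 ∪ {bRot})

lemma O3_mul {A B : M3} (hA : A ∈ O3) (hB : B ∈ O3) : A * B ∈ O3 := by
  refine ⟨?_, ?_⟩
  · rw [transpose_mul, Matrix.mul_assoc, ← Matrix.mul_assoc B, hB.1, Matrix.one_mul, hA.1]
  · rw [transpose_mul, Matrix.mul_assoc, ← Matrix.mul_assoc Aᵀ, hA.2, Matrix.one_mul, hB.2]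

lemma O3_transpose {A : M3} (hA : A ∈ O3) : Aᵀ ∈ O3 :=
  ⟨by simpa using hA.2, by simpa using hA.1⟩

lemma O3_neg {A : M3} (hA : A ∈ O3) : -A ∈ O3 :=
  ⟨by simpa using hA.1, by simpa using hA.2⟩

lemma O3_of_mul_transpose {A : M3} (h : A * Aᵀ = 1) : A ∈ O3 :=
  ⟨h, mul_eq_one_comm.mp h⟩

lemma det_sq {A : M3} (hA : A ∈ O3) : A.det * A.det = 1 := by
  have := congrArg det hA.1
  simpa [det_mul] using this

lemma det_cases {A : M3} (hA : A ∈ O3) : A.det = 1 ∨ A.det = -1 :=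
  mul_self_eq_one_iff.mp (det_sq hA)

lemma det_neg3 (A : M3) : (-A).det = -A.det := by
  rw [det_neg]; norm_num

/-- A subgroup of `O(3)` contains the square of every element of its image under `pr`. -/
lemma sq_mem {R : Set M3} (hR : IsSubgroupO3 R) {Y : M3} (hY : Y ∈ prS R) : Y * Y ∈ R := by
  obtain ⟨A, hA, rfl⟩ := hY
  have : pr A * pr A = A * A := by
    simp [pr, smul_smul, det_sq (hR.subset_O3 hA)]
  rw [this]
  exact hR.mul_mem hA hA

lemma neg_one_mem {R : Set M3} (hR : IsSubgroupO3 R) (hn : ¬ R ⊆ SO3) (h : prS R ⊆ R) :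
    (-1 : M3) ∈ R := by
  obtain ⟨A, hA, hA'⟩ := Set.not_subset.mp hn
  have hO := hR.subset_O3 hA
  have hd : A.det = -1 := (det_cases hO).resolve_left fun h1 => hA' ⟨hO, h1⟩
  have h1 : -A ∈ R := h ⟨A, hA, by simp [pr, hd]⟩
  have := hR.mul_mem h1 (hR.transpose_mem hA)
  simpa [hO.1] using this

/-- If `R` is not contained in `SO(3)` and `pr R ⊆ R`, then `-1 ∈ R` and thus `R = pr R × Z`. -/
lemma eq_prodZ {R : Set M3} (hR : IsSubgroupO3 R) (hn : ¬ R ⊆ SO3) (h : prS R ⊆ R) :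
    R = prodZ (prS R) := by
  have h1 := neg_one_mem hR hn h
  ext A
  constructor
  · intro hA
    rcases det_cases (hR.subset_O3 hA) with hd | hd
    · exact Or.inl ⟨A, hA, by simp [pr, hd]⟩
    · exact Or.inr ⟨-A, ⟨A, hA, by simp [pr, hd]⟩, by simp⟩
  · rintro (hA | ⟨B, hB, rfl⟩)
    · exact h hA
    · simpa using hR.mul_mem h1 (h hB)

/-! ### Conjugation -/

lemma orthConj_mul {P : M3} (hP : P ∈ O3) (A B : M3) :
    (P * A * Pᵀ) * (P * B * Pᵀ) = P * (A * B) * Pᵀ := by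
  calc _ = P * A * (Pᵀ * P) * B * Pᵀ := by simp only [Matrix.mul_assoc]
    _ = _ := by rw [hP.2]; simp only [Matrix.mul_assoc, Matrix.one_mul]

lemma conj_cancel {P : M3} (hP : P ∈ O3) (A : M3) : Pᵀ * (P * A * Pᵀ) * P = A := by
  calc _ = (Pᵀ * P) * A * (Pᵀ * P) := by simp only [Matrix.mul_assoc]
    _ = _ := by rw [hP.2]; simp

/-- If `pr R` is conjugate to `S`, then some conjugate of `R` has image `S` under `pr`. -/
lemma exists_conj {R S : Set M3} (hR : IsSubgroupO3 R) (hn : ¬ R ⊆ SO3) (h : ConjO3 (prS R) S) :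
    ∃ R' : Set M3, ConjO3 R R' ∧ IsSubgroupO3 R' ∧ ¬ R' ⊆ SO3 ∧ prS R' = S := by
  obtain ⟨P, hP, rfl⟩ := h
  refine ⟨_, ⟨P, hP, rfl⟩, ⟨?_, ?_, ?_, ?_⟩, ?_, ?_⟩
  · rintro _ ⟨A, hA, rfl⟩
    exact O3_mul (O3_mul hP (hR.subset_O3 hA)) (O3_transpose hP)
  · exact ⟨1, hR.one_mem, by simpa using hP.1⟩
  · rintro _ _ ⟨A, hA, rfl⟩ ⟨B, hB, rfl⟩
    exact ⟨A * B, hR.mul_mem hA hB, (orthConj_mul hP A B).symm⟩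
  · rintro _ ⟨A, hA, rfl⟩
    exact ⟨Aᵀ, hR.transpose_mem hA, by simp [Matrix.mul_assoc]⟩
  · intro hs
    refine hn fun A hA => ⟨hR.subset_O3 hA, ?_⟩
    have := (hs ⟨A, hA, rfl⟩).2
    simpa only [det_conj hP] using this
  · simp only [prS, Set.image_image, pr_conj hP]

/-! ### Rotations about the `z`-axis and half-turns -/

lemma rotZ_mul (s t : ℝ) : rotZ s * rotZ t = rotZ (s + t) := by
  ext i j
  fin_cases i <;> fin_cases j <;>
    simp [rotZ, Matrix.mul_apply, Fin.sum_univ_three, Real.cos_add, Real.sin_add] <;> ring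

lemma rotZ_half (t : ℝ) : rotZ (t / 2) * rotZ (t / 2) = rotZ t := by
  rw [rotZ_mul, add_halves]

lemma rotZ_zero : rotZ 0 = 1 := by
  ext i j
  fin_cases i <;> fin_cases j <;> simp [rotZ]

lemma rotZ_mem_SO3 (t : ℝ) : rotZ t ∈ SO3 := by
  have h := Real.sin_sq_add_cos_sq t
  refine ⟨O3_of_mul_transpose ?_, ?_⟩
  · ext i j
    fin_cases i <;> fin_cases j <;>
      simp [rotZ, Matrix.mul_apply, Fin.sum_univ_three] <;> linarith
  · simp [rotZ, det_fin_three]; linarith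

lemma aRot_two_sq : aRot 2 * aRot 2 = 1 := by
  rw [aRot, rotZ_mul]
  have : (2 * Real.pi / ((2 : ℕ) : ℝ) + 2 * Real.pi / ((2 : ℕ) : ℝ)) = 2 * Real.pi := by
    push_cast; ring
  rw [this, ← rotZ_zero]
  simp [rotZ]

lemma bRot_sq : bRot * bRot = 1 := by
  ext i j
  fin_cases i <;> fin_cases j <;> simp [bRot, Matrix.mul_apply, Fin.sum_univ_three]

lemma bRot_mul_rotZ (t : ℝ) : bRot * rotZ t = rotZ (-t) * bRot := by
  ext i j
  fin_cases i <;> fin_cases j <;> simp [bRot, rotZ, Matrix.mul_apply, Fin.sum_univ_three]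

lemma one_mem_so2 : (1 : M3) ∈ so2 := ⟨0, rotZ_zero⟩

lemma so2_mul {A B : M3} (hA : A ∈ so2) (hB : B ∈ so2) : A * B ∈ so2 := by
  obtain ⟨s, rfl⟩ := hA
  obtain ⟨t, rfl⟩ := hB
  exact ⟨s + t, (rotZ_mul s t).symm⟩

lemma so2_subset_of_so2_subset_prS {R : Set M3} (hR : IsSubgroupO3 R) (h : so2 ⊆ prS R) :
    so2 ⊆ R := by
  rintro _ ⟨t, rfl⟩
  rw [← rotZ_half]
  exact sq_mem hR (h ⟨_, rfl⟩)

lemma subset_gen (S : Set M3) : S ⊆ gen S := Submonoid.subset_closure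

lemma gen_mul {S : Set M3} {A B : M3} (hA : A ∈ gen S) (hB : B ∈ gen S) : A * B ∈ gen S :=
  Submonoid.mul_mem _ hA hB

lemma gen_subset {S R : Set M3} (hR : IsSubgroupO3 R) (h : S ⊆ R) : gen S ⊆ R := by
  intro A hA
  induction hA using Submonoid.closure_induction with
  | mem x hx => exact h hx
  | one => exact hR.one_mem
  | mul x y _ _ hx hy => exact hR.mul_mem hx hy

/-- Every element of `O(2)` is a rotation about the `z`-axis, possibly times `b`. -/
lemma o2_cases {A : M3} (hA : A ∈ o2) : ∃ t, A = rotZ t ∨ A = rotZ t * bRot := by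
  induction hA using Submonoid.closure_induction with
  | mem x hx =>
    rcases hx with ⟨t, rfl⟩ | hx
    · exact ⟨t, Or.inl rfl⟩
    · exact ⟨0, Or.inr (by rw [rotZ_zero, Matrix.one_mul]; exact hx)⟩
  | one => exact ⟨0, Or.inl rotZ_zero.symm⟩
  | mul x y _ _ hx hy =>
    obtain ⟨s, rfl | rfl⟩ := hx <;> obtain ⟨t, rfl | rfl⟩ := hy
    · exact ⟨s + t, Or.inl (rotZ_mul s t)⟩
    · exact ⟨s + t, Or.inr (by rw [← Matrix.mul_assoc, rotZ_mul])⟩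
    · exact ⟨s + -t, Or.inr (by
        rw [Matrix.mul_assoc, bRot_mul_rotZ, ← Matrix.mul_assoc, rotZ_mul])⟩
    · exact ⟨s + -t, Or.inl (by
        rw [Matrix.mul_assoc, ← Matrix.mul_assoc bRot, bRot_mul_rotZ, Matrix.mul_assoc _ bRot,
          bRot_sq, Matrix.mul_one, rotZ_mul])⟩

lemma prodZ_so2_eq : prodZ so2 = gen (so2 ∪ {-(aRot 2)}) := by
  have ha : aRot 2 ∈ so2 := ⟨_, rfl⟩
  apply Set.Subset.antisymm
  · rintro A (hA | ⟨B, hB, rfl⟩)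
    · exact subset_gen _ (Or.inl hA)
    · have : -B = (B * aRot 2) * -(aRot 2) := by
        rw [Matrix.mul_neg, Matrix.mul_assoc, aRot_two_sq, Matrix.mul_one]
      simp only [this]
      exact gen_mul (subset_gen _ (Or.inl (so2_mul hB ha))) (subset_gen _ (Or.inr rfl))
  · intro A hA
    induction hA using Submonoid.closure_induction with
    | mem x hx =>
      rcases hx with hx | hx
      · exact Or.inl hx
      · exact Or.inr ⟨_, ha, hx.symm⟩
    | one => exact Or.inl one_mem_so2
    | mul x y _ _ hx hy =>
      rcases hx with hx | ⟨x, hx, rfl⟩ <;> rcases hy with hy | ⟨y, hy, rfl⟩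
      · exact Or.inl (so2_mul hx hy)
      · exact Or.inr ⟨_, so2_mul hx hy, by simp⟩
      · exact Or.inr ⟨_, so2_mul hx hy, by simp⟩
      · left
        simpa using so2_mul hx hy

/-- The half-turn `2 v vᵀ - 1` about the axis spanned by the unit vector `v = (x, y, z)`. -/
def halfTurn (x y z : ℝ) : M3 :=
  !![2 * x * x - 1, 2 * x * y, 2 * x * z;
     2 * x * y, 2 * y * y - 1, 2 * y * z;
     2 * x * z, 2 * y * z, 2 * z * z - 1]

/-- The quarter-turn `v vᵀ + [v]ₓ` about the axis spanned by the unit vector `v = (x, y, z)`. -/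
def quarterTurn (x y z : ℝ) : M3 :=
  !![x * x, x * y - z, x * z + y;
     x * y + z, y * y, y * z - x;
     x * z - y, y * z + x, z * z]

lemma quarterTurn_sq {x y z : ℝ} (h : x ^ 2 + y ^ 2 + z ^ 2 = 1) :
    quarterTurn x y z * quarterTurn x y z = halfTurn x y z := by
  ext i j
  fin_cases i <;> fin_cases j <;>
    simp [quarterTurn, halfTurn, Matrix.mul_apply, Fin.sum_univ_three] <;> grind

lemma quarterTurn_mem_SO3 {x y z : ℝ} (h : x ^ 2 + y ^ 2 + z ^ 2 = 1) :
    quarterTurn x y z ∈ SO3 := by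
  refine ⟨O3_of_mul_transpose ?_, ?_⟩
  · ext i j
    fin_cases i <;> fin_cases j <;>
      simp [quarterTurn, Matrix.mul_apply, Fin.sum_univ_three] <;> grind
  · simp [quarterTurn, det_fin_three]; grind

lemma SO3_mul {A B : M3} (hA : A ∈ SO3) (hB : B ∈ SO3) : A * B ∈ SO3 :=
  ⟨O3_mul hA.1 hB.1, by rw [det_mul, hA.2, hB.2, one_mul]⟩

lemma halfTurn_mem_SO3 {x y z : ℝ} (h : x ^ 2 + y ^ 2 + z ^ 2 = 1) : halfTurn x y z ∈ SO3 := by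
  rw [← quarterTurn_sq h]
  exact SO3_mul (quarterTurn_mem_SO3 h) (quarterTurn_mem_SO3 h)

lemma halfTurn_sq {x y z : ℝ} (h : x ^ 2 + y ^ 2 + z ^ 2 = 1) :
    halfTurn x y z * halfTurn x y z = 1 := by
  ext i j
  fin_cases i <;> fin_cases j <;>
    simp [halfTurn, Matrix.mul_apply, Fin.sum_univ_three] <;> grind

/-- An element of `SO(3)` fixing the third basis vector is a rotation about the `z`-axis. -/
lemma eq_rotZ {B : M3} (hB : B ∈ SO3) (h0 : B 0 2 = 0) (h1 : B 1 2 = 0) (h2 : B 2 2 = 1) :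
    ∃ t, B = rotZ t := by
  have e := fun i j => congrFun (congrFun hB.1.2 i) j
  have e' := fun i j => congrFun (congrFun hB.1.1 i) j
  simp only [Matrix.mul_apply, Fin.sum_univ_three, transpose_apply] at e e'
  have e00 := e 0 0
  have e01 := e 0 1
  have e22 := e' 2 2
  simp at e00 e01 e22
  have hd := hB.2
  rw [det_fin_three] at hd
  rw [h2] at e22
  have h20 : B 2 0 = 0 := by nlinarith [sq_nonneg (B 2 0), sq_nonneg (B 2 1)]
  have h21 : B 2 1 = 0 := by nlinarith [sq_nonneg (B 2 0), sq_nonneg (B 2 1)]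
  simp only [h0, h1, h2, h20, h21] at e00 e01 hd
  have h11 : B 1 1 = B 0 0 := by
    linear_combination B 0 0 * hd - B 1 1 * e00 + B 1 0 * e01
  have h01 : B 0 1 = -B 1 0 := by
    linear_combination -B 1 0 * hd - B 0 1 * e00 + B 0 0 * e01
  have hn : ‖(⟨B 0 0, B 1 0⟩ : ℂ)‖ = 1 := by
    rw [Complex.norm_def, Complex.normSq_mk, Real.sqrt_eq_one]; linarith
  -- the angle is the argument of the complex number formed by the first column
  refine ⟨Complex.arg ⟨B 0 0, B 1 0⟩, ?_⟩
  have hc : Real.cos (Complex.arg ⟨B 0 0, B 1 0⟩) = B 0 0 := by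
    rw [Complex.cos_arg (by rw [← norm_ne_zero_iff, hn]; exact one_ne_zero), hn, div_one]
  have hs : Real.sin (Complex.arg ⟨B 0 0, B 1 0⟩) = B 1 0 := by
    rw [Complex.sin_arg, hn, div_one]
  ext i j
  fin_cases i <;> fin_cases j <;> simp [rotZ, hc, hs, h0, h1, h2, h20, h21, h11, h01]

/-- The half-turn about the bisector of `A e₃` and `e₃` (about the `x`-axis, if these are
opposite) moves `A e₃` to `e₃`, so that its product with `A` is a rotation about the `z`-axis. -/
lemma exists_halfTurn_mul_rotZ {A : M3} (hA : A ∈ SO3) :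
    ∃ x y z t : ℝ, x ^ 2 + y ^ 2 + z ^ 2 = 1 ∧ A = halfTurn x y z * rotZ t := by
  have e := congrFun (congrFun hA.1.2 2) 2
  simp only [Matrix.mul_apply, Fin.sum_univ_three, transpose_apply] at e
  simp at e
  obtain ⟨x, y, z, h, h0, h1, h2⟩ : ∃ x y z : ℝ, x ^ 2 + y ^ 2 + z ^ 2 = 1 ∧
      (halfTurn x y z * A) 0 2 = 0 ∧ (halfTurn x y z * A) 1 2 = 0 ∧
      (halfTurn x y z * A) 2 2 = 1 := by
    by_cases hm : A 2 2 = -1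
    · have h0 : A 0 2 = 0 := by nlinarith [sq_nonneg (A 0 2), sq_nonneg (A 1 2)]
      have h1 : A 1 2 = 0 := by nlinarith [sq_nonneg (A 0 2), sq_nonneg (A 1 2)]
      refine ⟨1, 0, 0, by norm_num, ?_, ?_, ?_⟩ <;>
        simp [halfTurn, Matrix.mul_apply, Fin.sum_univ_three, h0, h1, hm]
    · have hpos : 0 < 2 + 2 * A 2 2 := by
        have : -1 ≤ A 2 2 := by nlinarith [sq_nonneg (A 0 2), sq_nonneg (A 1 2)]
        have := lt_of_le_of_ne this (Ne.symm hm)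
        linarith
      -- `r` is the inverse of the norm of `A e₃ + e₃`
      obtain ⟨r, hr⟩ : ∃ r : ℝ, r ^ 2 * (2 + 2 * A 2 2) = 1 :=
        ⟨(√(2 + 2 * A 2 2))⁻¹, by
          rw [inv_pow, Real.sq_sqrt hpos.le, inv_mul_cancel₀ hpos.ne']⟩
      refine ⟨r * A 0 2, r * A 1 2, r * (A 2 2 + 1), ?_, ?_, ?_, ?_⟩
      · linear_combination r ^ 2 * e + hr
      all_goals simp [halfTurn, Matrix.mul_apply, Fin.sum_univ_three]
      · linear_combination A 0 2 * hr + 2 * r ^ 2 * A 0 2 * e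
      · linear_combination A 1 2 * hr + 2 * r ^ 2 * A 1 2 * e
      · linear_combination (A 2 2 + 1) * hr + 2 * r ^ 2 * (A 2 2 + 1) * e
  obtain ⟨t, ht⟩ := eq_rotZ (SO3_mul (halfTurn_mem_SO3 h) hA) h0 h1 h2
  refine ⟨x, y, z, t, h, ?_⟩
  rw [← ht, ← Matrix.mul_assoc, halfTurn_sq h, Matrix.one_mul]

lemma SO3_subset_of_SO3_subset_prS {R : Set M3} (hR : IsSubgroupO3 R) (h : SO3 ⊆ prS R) :
    SO3 ⊆ R := by
  intro A hA
  obtain ⟨x, y, z, t, hv, rfl⟩ := exists_halfTurn_mul_rotZ hA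
  refine hR.mul_mem ?_ ?_
  · rw [← quarterTurn_sq hv]
    exact sq_mem hR (h (quarterTurn_mem_SO3 hv))
  · rw [← rotZ_half]
    exact sq_mem hR (h (rotZ_mem_SO3 _))

/-! ### Cases (2) and (3) up to conjugation -/

lemma case_o2 {R : Set M3} (hR : IsSubgroupO3 R) (hn : ¬ R ⊆ SO3) (h : prS R = o2) :
    R = gen (so2 ∪ {-bRot}) ∨ R = prodZ o2 := by
  have hs : so2 ⊆ R := so2_subset_of_so2_subset_prS hR (by
    rw [h]; exact Set.subset_union_left.trans (subset_gen _))
  by_cases hb : bRot ∈ R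
  · right
    rw [← h]
    refine eq_prodZ hR hn ?_
    rw [h]
    exact gen_subset hR (Set.union_subset hs (by simpa using hb))
  · left
    have hnb : -bRot ∈ R := by
      have : bRot ∈ prS R := by rw [h]; exact subset_gen _ (Or.inr rfl)
      obtain ⟨A, hA, hAb⟩ := this
      rcases det_cases (hR.subset_O3 hA) with hd | hd
      · rw [pr, hd, one_smul] at hAb
        exact absurd (hAb ▸ hA) hb
      · rw [pr, hd, neg_one_smul] at hAb
        rw [← hAb, neg_neg]
        exact hA
    have hm1 : (-1 : M3) ∉ R := fun hm => hb (by simpa using hR.mul_mem hm hnb)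
    have hinv : ∀ t, rotZ (-t) * rotZ t = 1 := fun t => by
      rw [rotZ_mul, neg_add_cancel, rotZ_zero]
    apply Set.Subset.antisymm
    · intro A hA
      have hpr : pr A ∈ o2 := h ▸ ⟨A, hA, rfl⟩
      obtain ⟨t, ht⟩ := o2_cases hpr
      rcases det_cases (hR.subset_O3 hA) with hd | hd
      · rw [pr, hd, one_smul] at ht
        rcases ht with rfl | rfl
        · exact subset_gen _ (Or.inl ⟨t, rfl⟩)
        · refine absurd ?_ hb
          have := hR.mul_mem (hs ⟨-t, rfl⟩) hA
          rwa [← Matrix.mul_assoc, hinv, Matrix.one_mul] at this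
      · rw [pr, hd, neg_one_smul, neg_eq_iff_eq_neg, neg_eq_iff_eq_neg] at ht
        rcases ht with rfl | rfl
        · refine absurd ?_ hm1
          have := hR.mul_mem (hs ⟨-t, rfl⟩) hA
          rwa [Matrix.mul_neg, hinv] at this
        · rw [← Matrix.mul_neg]
          exact gen_mul (subset_gen _ (Or.inl ⟨t, rfl⟩)) (subset_gen _ (Or.inr rfl))
    · exact gen_subset hR (Set.union_subset hs (by simpa using hnb))

lemma case_SO3 {R : Set M3} (hR : IsSubgroupO3 R) (hn : ¬ R ⊆ SO3) (h : prS R = SO3) :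
    R = O3 := by
  have hs := SO3_subset_of_SO3_subset_prS hR h.ge
  have hm := neg_one_mem hR hn (h ▸ hs)
  refine Set.Subset.antisymm hR.subset_O3 fun A hA => ?_
  rcases det_cases hA with hd | hd
  · exact hs ⟨hA, hd⟩
  · have : -A ∈ R := hs ⟨O3_neg hA, by rw [det_neg3, hd, neg_neg]⟩
    simpa using hR.mul_mem hm this

/-- Let `R` be a closed infinite subgroup of `O(3)` not contained in
`SO(3)`.
(1) If `pr(R)` is conjugate in `O(3)` to `SO(2)`, then `R` is conjugate in `O(3)` to
`SO(2) × Z`, and moreover `SO(2) × Z = ⟨SO(2), -a₂⟩`.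
(2) If `pr(R)` is conjugate in `O(3)` to `O(2)`, then `R` is conjugate in `O(3)` to
`⟨SO(2), -b⟩` or to `O(2) × Z`.
(3) If `pr(R)` is conjugate in `O(3)` to `SO(3)`, then `R = O(3)`. -/
theorem statement6 (R : Set M3) (hR : IsSubgroupO3 R) (hclosed : IsClosed R)
    (hinf : R.Infinite) (hnotrot : ¬ R ⊆ SO3) :
    (ConjO3 (prS R) so2 →
      ConjO3 R (prodZ so2) ∧ prodZ so2 = gen (so2 ∪ {-(aRot 2)})) ∧
    (ConjO3 (prS R) o2 →
      ConjO3 R (gen (so2 ∪ {-bRot})) ∨ ConjO3 R (prodZ o2)) ∧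
    (ConjO3 (prS R) SO3 → R = O3) := by
  refine ⟨fun h => ⟨?_, prodZ_so2_eq⟩, fun h => ?_, fun h => ?_⟩
  · obtain ⟨R', hc, hR', hn', h'⟩ := exists_conj hR hnotrot h
    rw [← h', ← eq_prodZ hR' hn' (h' ▸ so2_subset_of_so2_subset_prS hR' h'.ge)]
    exact hc
  · obtain ⟨R', hc, hR', hn', h'⟩ := exists_conj hR hnotrot h
    rcases case_o2 hR' hn' h' with rfl | rfl
    · exact Or.inl hc
    · exact Or.inr hc
  · obtain ⟨R', ⟨P, hP, rfl⟩, hR', hn', h'⟩ := exists_conj hR hnotrot h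
    have hO := case_SO3 hR' hn' h'
    refine Set.Subset.antisymm hR.subset_O3 fun A hA => ?_
    have hPA : P * A * Pᵀ ∈ O3 := O3_mul (O3_mul hP hA) (O3_transpose hP)
    rw [← hO] at hPA
    obtain ⟨B, hB, hBA⟩ := hPA
    have := congrArg (fun X => Pᵀ * X * P) hBA
    simp only [conj_cancel hP] at this
    exact this ▸ hB
end
end

section
/- Let ψ be a pointwise preclutching map with respect to F. Then the quotient F/ψ carries an N₂-representation structure such that p_ψ is N₂-equivariant and ι_ψ is an isomorphism of N₁-representations if and only if the following two conditions hold: (1) ψ^m = id on F_{x̄_j} for every j ∈ ℤ/m (so that ψ^k is well defined for all k ∈ ℤ/m); (2) for every j₁ ∈ ℤ/m and g ∈ N₂, writing g^{-1}x̄_{j₁} = x̄_{j₂} and g·x̄_{j₂+1} = x̄_{j₃}, one has ψ^{j₃−j₁} = g ∘ ψ(x̄_{j₂}) ∘ g^{-1} as maps defined on F_{x̄_{j₁}}. -/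
/-! Write `π : V → F/ψ` for the quotient map. It satisfies `π ∘ Ψ = π`, and its kernel is the
range of `1 - Ψ` because the fibers span `V`.

If `F/ψ` carries the structure in question, then `π` is injective on `F 0`, hence on every fiber:
move a fiber to `F 0` by a power of `Ψ` (`mkQ_injOn_fiber`). Both sides of (1), and both sides of
(2), lie in a common fiber and have the same image under `π`, so they agree.

Conversely, (2) says that `ρ g` sends `u - ψ u` to `u' - ψ^k u'` with `u' = ρ g u`, so `ρ g`
preserves `ker π` and descends. The map `F 0 → F/ψ` is always surjective. It is injective by (1):
the norm `N = ∑_{j ∈ ℤ/m} Ψ^j` satisfies `N ∘ Ψ = N`, so it kills `ker π`; but for `u ∈ F 0` the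
terms of `N u` lie in distinct fibers, so `N u = 0` forces `u = 0`. -/

/-! Setup: a group `N₂` acts on the finite set `x̄ = {x̄_j : j ∈ ℤ/m}`, modelled as a
`MulAction` of `N₂` on `ZMod m`.  An `N₂`-vector bundle `F` over `x̄` is modelled as a
finite-dimensional complex vector space `V` together with a representation
`ρ : N₂ →* End(V)` and a family of submodules `F j ⊆ V` (the fibers) forming an internal
direct sum decomposition of `V` with `ρ g (F j) = F (g • j)`.  A pointwise preclutching
map, i.e. a family of linear isomorphisms `ψ(x̄_j) : F j → F (j+1)`, is modelled as a
single continuous linear map `Ψ : V → V` restricting to a bijection `F j → F (j+1)` on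
each fiber.  For `u ∈ F j`, the iterate `ψ^k u` is then just `Ψ^k u`. -/

noncomputable section
open Function Set

namespace Clutch

variable {m : ℕ} {N₂ : Type*} [Group N₂] [MulAction N₂ (ZMod m)]
variable {V : Type*} [NormedAddCommGroup V] [NormedSpace ℂ V]

/-- `Ψ` is a pointwise preclutching map with respect to the fibers `F`:
for each `j ∈ ℤ/m` it restricts to a (linear) bijection `F j → F (j+1)`. -/
def IsPreclutch (F : ZMod m → Submodule ℂ V) (Ψ : V →L[ℂ] V) : Prop :=
  ∀ j : ZMod m, Set.BijOn Ψ (F j) (F (j + 1))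

/-- `Ψ` is an equivariant pointwise clutching map: it is a pointwise preclutching map
such that (1) `ψ^m = id` on each fiber `F j`, and (2) for every `g ∈ N₂` and `j₁ ∈ ℤ/m`,
writing `j₂ = g⁻¹ • j₁` and `j₃ = g • (j₂ + 1)`, one has
`ψ^(j₃ - j₁) = g ∘ ψ(x̄_{j₂}) ∘ g⁻¹` on `F j₁` (the exponent `j₃ - j₁ ∈ ℤ/m` is
interpreted via its canonical representative). -/
def IsClutch (ρ : Representation ℂ N₂ V) (F : ZMod m → Submodule ℂ V)
    (Ψ : V →L[ℂ] V) : Prop :=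
  IsPreclutch F Ψ ∧
  (∀ j : ZMod m, ∀ u ∈ F j, (Ψ ^ m) u = u) ∧
  (∀ (g : N₂) (j₁ : ZMod m), ∀ u ∈ F j₁,
    (Ψ ^ ((g • (g⁻¹ • j₁ + 1) - j₁ : ZMod m)).val) u = ρ g (Ψ (ρ g⁻¹ u)))

/-- The subspace of `V` spanned by all vectors `u - ψ(x̄_j) u`, `u ∈ F j`; the quotient
`F/ψ` is `V ⧸ clutchSub F Ψ`. -/
def clutchSub (F : ZMod m → Submodule ℂ V) (Ψ : V →L[ℂ] V) : Submodule ℂ V :=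
  Submodule.span ℂ {w : V | ∃ j : ZMod m, ∃ u ∈ F j, w = u - Ψ u}

/-- The quotients `F/ψ` and `F/ψ'` are isomorphic as `N₂`-representations (with respect
to the induced representations, whose action is characterized by commuting with the
quotient maps). -/
def QuotIso (ρ : Representation ℂ N₂ V) (F : ZMod m → Submodule ℂ V)
    (Ψ Ψ' : V →L[ℂ] V) : Prop :=
  ∃ θ : (V ⧸ clutchSub F Ψ) →ₗ[ℂ] (V ⧸ clutchSub F Ψ'),
    Function.Bijective θ ∧
    ∀ (g : N₂) (v w : V), θ ((clutchSub F Ψ).mkQ v) = (clutchSub F Ψ').mkQ w →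
      θ ((clutchSub F Ψ).mkQ (ρ g v)) = (clutchSub F Ψ').mkQ (ρ g w)

end Clutch

open Clutch

section Helpers

variable {m : ℕ} {V : Type*} [NormedAddCommGroup V] [NormedSpace ℂ V]
  {F : ZMod m → Submodule ℂ V} {Ψ : V →L[ℂ] V}

lemma pow_bijOn_fiber (hΨ : IsPreclutch F Ψ) (k : ℕ) (j : ZMod m) :
    Set.BijOn (Ψ ^ k : V →L[ℂ] V) (F j) (F (j + k)) := by
  induction k with
  | zero => simpa using Set.bijOn_id (F j : Set V)
  | succ k ih =>
    have h := (hΨ (j + k)).comp ih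
    rw [add_assoc] at h
    rw [pow_succ', Nat.cast_succ]
    exact h

/-- The generators of `clutchSub F Ψ` have `u` in a fiber; as the fibers span `V`, every
`v - Ψ v` lies in it. -/
lemma sub_mem_clutchSub [NeZero m] (hF : DirectSum.IsInternal F) (v : V) :
    v - Ψ v ∈ clutchSub F Ψ := by
  have hv : v ∈ ⨆ j, F j := by rw [hF.submodule_iSup_eq_top]; trivial
  induction hv using Submodule.iSup_induction' with
  | mem j u hu => exact Submodule.subset_span ⟨j, u, hu, rfl⟩
  | zero => simp
  | add x y _ _ hx hy =>
    have := add_mem hx hy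
    rwa [sub_add_sub_comm, ← map_add] at this

lemma mkQ_pow [NeZero m] (hF : DirectSum.IsInternal F) (k : ℕ) (v : V) :
    (clutchSub F Ψ).mkQ ((Ψ ^ k) v) = (clutchSub F Ψ).mkQ v := by
  induction k with
  | zero => simp
  | succ k ih =>
    rw [← ih, pow_succ', mul_apply_eq_comp]
    symm
    rw [← sub_eq_zero, ← map_sub, Submodule.mkQ_apply, Submodule.Quotient.mk_eq_zero]
    exact sub_mem_clutchSub hF _

/-- Parallel transport of the fiber over `j` to the fiber over `0`. -/
lemma pow_neg_val_mem [NeZero m] (hΨ : IsPreclutch F Ψ) {j : ZMod m} {u : V} (hu : u ∈ F j) :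
    (Ψ ^ (-j).val) u ∈ F 0 := by
  have := (pow_bijOn_fiber hΨ (-j).val j).mapsTo hu
  simpa using this

/-- Injectivity of `ι_ψ` propagates from `F 0` to every fiber, because powers of `Ψ` move fibers
into `F 0` without changing classes in the quotient. -/
lemma mkQ_injOn_fiber [NeZero m] (hF : DirectSum.IsInternal F) (hΨ : IsPreclutch F Ψ)
    (hinj : Function.Injective (fun u : ↥(F (0 : ZMod m)) => (clutchSub F Ψ).mkQ (u : V)))
    {j : ZMod m} {u v : V} (hu : u ∈ F j) (hv : v ∈ F j)
    (h : (clutchSub F Ψ).mkQ u = (clutchSub F Ψ).mkQ v) : u = v := by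
  apply (pow_bijOn_fiber hΨ (-j).val j).injOn hu hv
  have := @hinj ⟨_, pow_neg_val_mem hΨ hu⟩ ⟨_, pow_neg_val_mem hΨ hv⟩
    (by simp only [mkQ_pow hF, h])
  exact congrArg Subtype.val this

lemma mkQ_fiber_zero_surjective [NeZero m] (hF : DirectSum.IsInternal F)
    (hΨ : IsPreclutch F Ψ) :
    Function.Surjective (fun u : ↥(F (0 : ZMod m)) => (clutchSub F Ψ).mkQ (u : V)) := by
  intro q
  obtain ⟨v, rfl⟩ := (clutchSub F Ψ).mkQ_surjective q
  have hv : v ∈ ⨆ j, F j := by rw [hF.submodule_iSup_eq_top]; trivial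
  induction hv using Submodule.iSup_induction' with
  | mem j u hu => exact ⟨⟨_, pow_neg_val_mem hΨ hu⟩, mkQ_pow hF _ _⟩
  | zero => exact ⟨0, by simp⟩
  | add x y _ _ hx hy =>
    obtain ⟨a, ha⟩ := hx
    obtain ⟨b, hb⟩ := hy
    exact ⟨a + b, by simp only [Submodule.coe_add, map_add, ← ha, ← hb]⟩

/-- The norm element `∑_{j ∈ ℤ/m} Ψ^j`. -/
def normOp (m : ℕ) [NeZero m] (Ψ : V →L[ℂ] V) : V →L[ℂ] V := ∑ j : ZMod m, Ψ ^ j.val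

/-- As `Ψ ^ m = 1`, right multiplication by `Ψ` only shifts the index `j ∈ ℤ/m`; the hypothesis
`2 ≤ m` gives `(1 : ZMod m).val = 1`. -/
lemma normOp_mul [NeZero m] (hm : 2 ≤ m) (h : Ψ ^ m = 1) : normOp m Ψ * Ψ = normOp m Ψ := by
  have : Fact (1 < m) := ⟨hm⟩
  unfold normOp
  rw [Finset.sum_mul, ← Equiv.sum_comp (Equiv.addRight (1 : ZMod m)) (fun j => Ψ ^ j.val)]
  refine Finset.sum_congr rfl fun j _ => ?_
  rw [← pow_succ, Equiv.coe_addRight, ZMod.val_add, ZMod.val_one, ← pow_eq_pow_mod _ h]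

/-- Condition (1) alone makes `ι_ψ` injective. -/
lemma mkQ_fiber_zero_injective [NeZero m] (hm : 2 ≤ m) (hF : DirectSum.IsInternal F)
    (hΨ : IsPreclutch F Ψ) (h1 : ∀ j : ZMod m, ∀ u ∈ F j, (Ψ ^ m) u = u) :
    Function.Injective (fun u : ↥(F (0 : ZMod m)) => (clutchSub F Ψ).mkQ (u : V)) := by
  have hpow : Ψ ^ m = 1 := by
    ext v
    have hv : v ∈ ⨆ j, F j := by rw [hF.submodule_iSup_eq_top]; trivial
    induction hv using Submodule.iSup_induction' with
    | mem j u hu => exact h1 j u hu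
    | zero => simp
    | add x y _ _ hx hy => rw [map_add, map_add, hx, hy]
  have hker : clutchSub F Ψ ≤ LinearMap.ker (normOp m Ψ : V →ₗ[ℂ] V) := by
    refine Submodule.span_le.2 ?_
    rintro _ ⟨j, u, -, rfl⟩
    have := congrArg (fun T : V →L[ℂ] V => T u) (normOp_mul hm hpow)
    simp only [mul_apply_eq_comp] at this
    simp [this]
  rintro ⟨u, hu⟩ ⟨v, hv⟩ huv
  have hS : u - v ∈ clutchSub F Ψ := (Submodule.Quotient.eq _).1 huv
  have hw : u - v ∈ F 0 := sub_mem hu hv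
  have hN : ∑ j : ZMod m, (Ψ ^ j.val) (u - v) = 0 := by
    have := hker hS
    simpa only [normOp, LinearMap.mem_ker, ContinuousLinearMap.coe_coe,
      sum_apply] using this
  -- the `j`-th summand lies in `F j`, so independence kills each one; the `0`-th is `u - v`
  have hz := (iSupIndep_iff_finsetSum_eq_zero_imp_eq_zero F).1 hF.submodule_iSupIndep
    Finset.univ (fun j => (Ψ ^ j.val) (u - v))
    (fun j _ => by simpa using (pow_bijOn_fiber hΨ j.val 0).mapsTo hw) hN 0 (Finset.mem_univ _)
  have : u - v = 0 := by simpa using hz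
  exact Subtype.ext (sub_eq_zero.1 this)

end Helpers

/-- Let `ψ` (encoded by `Ψ`) be a pointwise preclutching map with
respect to `F`.  Then the quotient `F/ψ` carries an `N₂`-representation structure such
that the quotient map `p_ψ` is `N₂`-equivariant and `ι_ψ : F x̄₀ → F/ψ` is an isomorphism
of `N₁`-representations if and only if (1) `ψ^m = id` on each `F j`, and (2) for every
`j₁ ∈ ℤ/m` and `g ∈ N₂`, writing `j₂ = g⁻¹ • j₁` and `j₃ = g • (j₂ + 1)`, one has
`ψ^(j₃ - j₁) = g ∘ ψ(x̄_{j₂}) ∘ g⁻¹` on `F j₁`. -/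
theorem statement8 {m : ℕ} [NeZero m] (hm : 2 ≤ m)
    {N₂ : Type*} [Group N₂] [MulAction N₂ (ZMod m)]
    {V : Type*} [NormedAddCommGroup V] [NormedSpace ℂ V] [FiniteDimensional ℂ V]
    (ρ : Representation ℂ N₂ V) (F : ZMod m → Submodule ℂ V)
    (hF : DirectSum.IsInternal F)
    (hρF : ∀ (g : N₂) (j : ZMod m), (F j).map (ρ g) = F (g • j))
    (Ψ : V →L[ℂ] V) (hΨ : IsPreclutch F Ψ) :
    (∃ σ : Representation ℂ N₂ (V ⧸ clutchSub F Ψ),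
      (∀ (g : N₂) (v : V), σ g ((clutchSub F Ψ).mkQ v) = (clutchSub F Ψ).mkQ (ρ g v)) ∧
      Function.Bijective
        (fun u : ↥(F (0 : ZMod m)) => (clutchSub F Ψ).mkQ (u : V))) ↔
    ((∀ j : ZMod m, ∀ u ∈ F j, (Ψ ^ m) u = u) ∧
     (∀ (g : N₂) (j₁ : ZMod m), ∀ u ∈ F j₁,
        (Ψ ^ ((g • (g⁻¹ • j₁ + 1) - j₁ : ZMod m)).val) u = ρ g (Ψ (ρ g⁻¹ u)))) := by
  have hρ : ∀ (g : N₂) (j : ZMod m) (u : V), u ∈ F j → ρ g u ∈ F (g • j) := fun g j u hu =>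
    hρF g j ▸ Submodule.mem_map_of_mem hu
  constructor
  · rintro ⟨σ, hσ, hinj, -⟩
    refine ⟨fun j u hu => ?_, fun g j₁ u hu => ?_⟩
    · have hmem := (pow_bijOn_fiber hΨ m j).mapsTo hu
      rw [ZMod.natCast_self, add_zero] at hmem
      exact mkQ_injOn_fiber hF hΨ hinj hmem hu (mkQ_pow hF _ _)
    · have hl := (pow_bijOn_fiber hΨ (g • (g⁻¹ • j₁ + 1) - j₁ : ZMod m).val j₁).mapsTo hu
      rw [ZMod.natCast_zmod_val, add_sub_cancel] at hl
      have hr := hρ g _ _ ((hΨ (g⁻¹ • j₁)).mapsTo (hρ g⁻¹ j₁ u hu))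
      refine mkQ_injOn_fiber hF hΨ hinj hl hr ?_
      have hΨ1 := mkQ_pow (Ψ := Ψ) hF 1 (ρ g⁻¹ u)
      rw [pow_one] at hΨ1
      rw [mkQ_pow hF, ← hσ, hΨ1, hσ, Representation.self_inv_apply]
  · rintro ⟨h1, h2⟩
    have hinv : ∀ g : N₂, clutchSub F Ψ ≤ (clutchSub F Ψ).comap (ρ g) := by
      intro g
      refine Submodule.span_le.2 ?_
      rintro _ ⟨j, u, hu, rfl⟩
      -- condition (2) at `j₁ = g • j`, applied to `ρ g u`
      have h := h2 g (g • j) (ρ g u) (hρ g j u hu)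
      rw [Representation.inv_self_apply] at h
      rw [SetLike.mem_coe, Submodule.mem_comap, map_sub, ← h, ← Submodule.Quotient.eq]
      exact (mkQ_pow hF _ _).symm
    refine ⟨{ toFun := fun g => (clutchSub F Ψ).mapQ _ (ρ g) (hinv g)
              map_one' := ?_
              map_mul' := ?_ }, fun g v => rfl,
      mkQ_fiber_zero_injective hm hF hΨ h1, mkQ_fiber_zero_surjective hF hΨ⟩
    · ext v; simp
    · intro g h; ext v; simp
end
end

section
/- Let W be an N₂-representation whose restriction to N₁ is isomorphic to F_{x̄₀}, and assume there exists an N₂-equivariant linear map p : ⊕_j F_{x̄_j} → W whose restriction p|_{F_{x̄_j}} is a (not necessarily equivariant) linear isomorphism for each j ∈ ℤ/m. Define a pointwise preclutching map ψ by ψ(x̄_j) = (p|_{F_{x̄_{j+1}}})^{-1} ∘ (p|_{F_{x̄_j}}) for j ∈ ℤ/m. Then ψ is an equivariant pointwise clutching map with respect to F, and there is an N₂-isomorphism ι : W → F/ψ such that p_ψ = ι ∘ p; in particular, the set 𝒜 of equivariant pointwise clutching maps with respect to F is nonempty. -/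
/-!
Since `p` is injective on each fiber, two vectors of the same fiber with the same image under `p`
coincide. Every iterate of `ψ` moves fibers by the expected shift and preserves `p`
(`iterate_mem_and_map`), so both clutching identities hold: their two sides lie in the same fiber
and have the same image under `p`, by equivariance of `p`.

For the quotient, let `q₀ : W → F x̄₀` be the inverse of `p` on the fiber over `x̄₀` and
let `ι` be `q₀` followed by `p_ψ`. A vector `u` of any fiber is congruent modulo `u - ψ u` to
an iterate lying over `x̄₀`, which must be `q₀ (p u)`; hence `p_ψ = ι ∘ p`. As `p` kills every
`u - ψ u`, it factors through the quotient, which makes `ι` injective. The representation on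
`F/ψ` is the one transported from `W` along `ι`.
-/

/-! Setup: a group `N₂` acts on the finite set `x̄ = {x̄_j : j ∈ ℤ/m}`, modelled as a
`MulAction` of `N₂` on `ZMod m`.  An `N₂`-vector bundle `F` over `x̄` is modelled as a
finite-dimensional complex vector space `V` together with a representation
`ρ : N₂ →* End(V)` and a family of submodules `F j ⊆ V` (the fibers) forming an internal
direct sum decomposition of `V` with `ρ g (F j) = F (g • j)`.  A pointwise preclutching
map, i.e. a family of linear isomorphisms `ψ(x̄_j) : F j → F (j+1)`, is modelled as a
single continuous linear map `Ψ : V → V` restricting to a bijection `F j → F (j+1)` on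
each fiber.  For `u ∈ F j`, the iterate `ψ^k u` is then just `Ψ^k u`. -/

noncomputable section
open Function Set

open Clutch

namespace Clutch

variable {m : ℕ} {V : Type*} [NormedAddCommGroup V] [NormedSpace ℂ V]
  {W : Type*} [AddCommGroup W] [Module ℂ W]

/-- A fiberwise bijective `p` has a linear inverse `W → F j` on each fiber. -/
theorem exists_fiber_inverse {F : ZMod m → Submodule ℂ V} {p : V →ₗ[ℂ] W}
    (hpfib : ∀ j : ZMod m, Set.BijOn p (F j) Set.univ) (j : ZMod m) :
    ∃ q : W →ₗ[ℂ] V, ∀ w, q w ∈ F j ∧ p (q w) = w := by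
  have hb : Function.Bijective (p.domRestrict (F j)) := by
    refine ⟨fun u v h => Subtype.ext ((hpfib j).injOn u.2 v.2 h), fun w => ?_⟩
    obtain ⟨u, hu, rfl⟩ := (hpfib j).surjOn (Set.mem_univ w)
    exact ⟨⟨u, hu⟩, rfl⟩
  let E := LinearEquiv.ofBijective _ hb
  exact ⟨(F j).subtype ∘ₗ E.symm.toLinearMap,
    fun w => ⟨(E.symm w).2, E.apply_symm_apply w⟩⟩

theorem exists_preclutch [FiniteDimensional ℂ V] {F : ZMod m → Submodule ℂ V}
    (hF : DirectSum.IsInternal F) {p : V →ₗ[ℂ] W}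
    (hpfib : ∀ j : ZMod m, Set.BijOn p (F j) Set.univ) :
    ∃ Ψ : V →L[ℂ] V, ∀ j : ZMod m, ∀ u ∈ F j, Ψ u ∈ F (j + 1) ∧ p (Ψ u) = p u := by
  choose q hqF hqp using exists_fiber_inverse hpfib
  let E := LinearEquiv.ofBijective (DirectSum.coeLinearMap F) hF
  let Φ : V →ₗ[ℂ] V :=
    DirectSum.toModule ℂ (ZMod m) V (fun j => q (j + 1) ∘ₗ p ∘ₗ (F j).subtype) ∘ₗ
      E.symm.toLinearMap
  have hΦ : ∀ j, ∀ u ∈ F j, Φ u = q (j + 1) (p u) := by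
    intro j u hu
    have hE : E.symm u = DirectSum.lof ℂ (ZMod m) (fun j => F j) j ⟨u, hu⟩ := by
      rw [LinearEquiv.symm_apply_eq]
      exact (DirectSum.coeLinearMap_lof F j ⟨u, hu⟩).symm
    simp [Φ, hE]
  refine ⟨LinearMap.toContinuousLinearMap Φ, fun j u hu => ?_⟩
  rw [LinearMap.coe_toContinuousLinearMap', hΦ j u hu]
  exact ⟨hqF _ _, hqp _ _⟩

section

variable {F : ZMod m → Submodule ℂ V} {p : V →ₗ[ℂ] W} {Ψ : V →L[ℂ] V}

theorem iterate_mem_and_map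
    (hΨ : ∀ j : ZMod m, ∀ u ∈ F j, Ψ u ∈ F (j + 1) ∧ p (Ψ u) = p u)
    (k : ℕ) {j : ZMod m} {u : V} (hu : u ∈ F j) :
    (Ψ ^ k) u ∈ F (j + k) ∧ p ((Ψ ^ k) u) = p u := by
  induction k with
  | zero => simpa using hu
  | succ k ih =>
    rw [pow_succ', mul_apply_eq_comp]
    obtain ⟨h1, h2⟩ := hΨ _ _ ih.1
    refine ⟨?_, h2.trans ih.2⟩
    rwa [Nat.cast_succ, ← add_assoc]

theorem isClutch_of_map_eq [NeZero m] {N₂ : Type*} [Group N₂] [MulAction N₂ (ZMod m)]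
    {ρ : Representation ℂ N₂ V}
    (hρF : ∀ (g : N₂) (j : ZMod m), (F j).map (ρ g) = F (g • j))
    {σ : Representation ℂ N₂ W} (hp : ∀ (g : N₂) (v : V), p (ρ g v) = σ g (p v))
    (hpfib : ∀ j : ZMod m, Set.BijOn p (F j) Set.univ)
    (hΨ : ∀ j : ZMod m, ∀ u ∈ F j, Ψ u ∈ F (j + 1) ∧ p (Ψ u) = p u) :
    IsClutch ρ F Ψ := by
  have hρ : ∀ (g : N₂) {j : ZMod m} {u : V}, u ∈ F j → ρ g u ∈ F (g • j) :=
    fun g j u hu => hρF g j ▸ Submodule.mem_map_of_mem hu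
  refine ⟨fun j => ⟨fun u hu => (hΨ j u hu).1, fun u hu v hv h => ?_, fun v hv => ?_⟩,
    fun j u hu => ?_, fun g j u hu => ?_⟩
  · apply (hpfib j).injOn hu hv
    rw [← (hΨ j u hu).2, ← (hΨ j v hv).2, h]
  · obtain ⟨u, hu, huv⟩ := (hpfib j).surjOn (Set.mem_univ (p v))
    exact ⟨u, hu, (hpfib (j + 1)).injOn (hΨ j u hu).1 hv ((hΨ j u hu).2.trans huv)⟩
  · obtain ⟨h1, h2⟩ := iterate_mem_and_map hΨ m hu
    rw [ZMod.natCast_self, add_zero] at h1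
    exact (hpfib j).injOn h1 hu h2
  · obtain ⟨h1, h2⟩ :=
      iterate_mem_and_map hΨ ((g • (g⁻¹ • j + 1) - j : ZMod m)).val hu
    rw [ZMod.natCast_zmod_val, add_sub_cancel] at h1
    obtain ⟨h3, h4⟩ := hΨ _ _ (hρ g⁻¹ hu)
    refine (hpfib _).injOn h1 (hρ g h3) (h2.trans ?_)
    rw [hp, h4, ← hp, Representation.self_inv_apply]

theorem clutchSub_le_ker
    (hΨ : ∀ j : ZMod m, ∀ u ∈ F j, Ψ u ∈ F (j + 1) ∧ p (Ψ u) = p u) :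
    clutchSub F Ψ ≤ LinearMap.ker p := by
  refine Submodule.span_le.2 ?_
  rintro _ ⟨j, u, hu, rfl⟩
  simp [(hΨ j u hu).2]

theorem mkQ_iterate
    (hΨ : ∀ j : ZMod m, ∀ u ∈ F j, Ψ u ∈ F (j + 1) ∧ p (Ψ u) = p u)
    (k : ℕ) {j : ZMod m} {u : V} (hu : u ∈ F j) :
    (clutchSub F Ψ).mkQ ((Ψ ^ k) u) = (clutchSub F Ψ).mkQ u := by
  induction k with
  | zero => simp
  | succ k ih =>
    rw [← ih, eq_comm, pow_succ', mul_apply_eq_comp, Submodule.mkQ_apply,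
      Submodule.mkQ_apply, Submodule.Quotient.eq]
    exact Submodule.subset_span ⟨_, _, (iterate_mem_and_map hΨ k hu).1, rfl⟩

/-- The isomorphism `W ≃ F/ψ` under which `p` becomes the quotient map `p_ψ`. -/
theorem exists_quotient_equiv [NeZero m] (hF : DirectSum.IsInternal F)
    (hpfib : ∀ j : ZMod m, Set.BijOn p (F j) Set.univ)
    (hΨ : ∀ j : ZMod m, ∀ u ∈ F j, Ψ u ∈ F (j + 1) ∧ p (Ψ u) = p u) :
    ∃ E : W ≃ₗ[ℂ] V ⧸ clutchSub F Ψ, ∀ v, (clutchSub F Ψ).mkQ v = E (p v) := by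
  obtain ⟨q, hq⟩ := exists_fiber_inverse hpfib 0
  have key : ∀ v, (clutchSub F Ψ).mkQ v = (clutchSub F Ψ).mkQ (q (p v)) := by
    intro v
    have hv : v ∈ ⨆ j, F j := hF.submodule_iSup_eq_top ▸ Submodule.mem_top
    induction hv using Submodule.iSup_induction' with
    | mem j u hu =>
      -- Shifting by `-j` brings `u` to the fiber over `x̄₀`.
      obtain ⟨h1, h2⟩ := iterate_mem_and_map hΨ (-j).val hu
      rw [ZMod.natCast_zmod_val, add_neg_cancel] at h1
      rw [← mkQ_iterate hΨ (-j).val hu,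
        (hpfib 0).injOn h1 (hq (p u)).1 (h2.trans (hq (p u)).2.symm)]
    | zero => simp
    | add u v _ _ hu hv => simp only [map_add, hu, hv]
  refine ⟨LinearEquiv.ofBijective ((clutchSub F Ψ).mkQ ∘ₗ q) ⟨?_, ?_⟩, key⟩
  · rw [injective_iff_map_eq_zero]
    intro w hw
    have h : q w ∈ clutchSub F Ψ := (Submodule.Quotient.mk_eq_zero _).1 hw
    rw [← (hq w).2]
    exact clutchSub_le_ker hΨ h
  · intro x
    obtain ⟨v, rfl⟩ := (clutchSub F Ψ).mkQ_surjective x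
    exact ⟨p v, (key v).symm⟩

end

end Clutch

/-- Let `W` be an `N₂`-representation whose restriction to
`N₁ = Stab(x̄₀)` is isomorphic to `F x̄₀`, and assume there is an `N₂`-equivariant linear
map `p : V = ⊕_j F j → W` restricting to a linear isomorphism on each fiber.  Let `ψ` be
the pointwise preclutching map `ψ(x̄_j) = (p|_{F (j+1)})⁻¹ ∘ (p|_{F j})` (i.e. any
`Ψ : V → V` with `Ψ u ∈ F (j+1)` and `p (Ψ u) = p u` for `u ∈ F j`; such a `Ψ` exists).
Then `ψ` is an equivariant pointwise clutching map and there is an `N₂`-isomorphism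
`ι : W → F/ψ` with `p_ψ = ι ∘ p`.  In particular the set of equivariant pointwise
clutching maps is nonempty. -/
theorem statement9 {m : ℕ} [NeZero m] (hm : 2 ≤ m)
    {N₂ : Type*} [Group N₂] [MulAction N₂ (ZMod m)]
    {V : Type*} [NormedAddCommGroup V] [NormedSpace ℂ V] [FiniteDimensional ℂ V]
    (ρ : Representation ℂ N₂ V) (F : ZMod m → Submodule ℂ V)
    (hF : DirectSum.IsInternal F)
    (hρF : ∀ (g : N₂) (j : ZMod m), (F j).map (ρ g) = F (g • j))
    {W : Type*} [AddCommGroup W] [Module ℂ W] (σ : Representation ℂ N₂ W)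
    (hres : ∃ e : V →ₗ[ℂ] W, Set.BijOn e (F (0 : ZMod m)) Set.univ ∧
      ∀ g ∈ MulAction.stabilizer N₂ (0 : ZMod m), ∀ u ∈ F (0 : ZMod m),
        e (ρ g u) = σ g (e u))
    (p : V →ₗ[ℂ] W)
    (hp : ∀ (g : N₂) (v : V), p (ρ g v) = σ g (p v))
    (hpfib : ∀ j : ZMod m, Set.BijOn p (F j) Set.univ) :
    (∃ Ψ : V →L[ℂ] V, ∀ j : ZMod m, ∀ u ∈ F j, Ψ u ∈ F (j + 1) ∧ p (Ψ u) = p u) ∧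
    (∀ Ψ : V →L[ℂ] V, (∀ j : ZMod m, ∀ u ∈ F j, Ψ u ∈ F (j + 1) ∧ p (Ψ u) = p u) →
      IsClutch ρ F Ψ ∧
      ∃ σQ : Representation ℂ N₂ (V ⧸ clutchSub F Ψ),
        (∀ (g : N₂) (v : V),
          σQ g ((clutchSub F Ψ).mkQ v) = (clutchSub F Ψ).mkQ (ρ g v)) ∧
        ∃ ι : W →ₗ[ℂ] V ⧸ clutchSub F Ψ, Function.Bijective ι ∧
          (∀ v : V, (clutchSub F Ψ).mkQ v = ι (p v)) ∧
          (∀ (g : N₂) (w : W), ι (σ g w) = σQ g (ι w))) := by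
  refine ⟨exists_preclutch hF hpfib, fun Ψ hΨ =>
    ⟨isClutch_of_map_eq hρF hp hpfib hΨ, ?_⟩⟩
  obtain ⟨E, hE⟩ := exists_quotient_equiv hF hpfib hΨ
  refine ⟨(LinearEquiv.conjRingEquiv E : Module.End ℂ W →* _).comp σ, fun g v => ?_,
    E.toLinearMap, E.bijective, hE, fun g w => ?_⟩
  · simp [hE, hp, LinearEquiv.conjRingEquiv]
  · simp [LinearEquiv.conjRingEquiv]
end
end

section
/- Assume F satisfies Condition F1 (m = 2, N₂ fixes both x̄₀ and x̄₁, and F_{x̄₀} ≅ F_{x̄₁} as N₂-representations). Then the set 𝒜 of equivariant pointwise clutching maps with respect to F is homeomorphic, via the evaluation map ψ ↦ ψ(x̄₀), to the nonempty space 𝒜⁰ = Iso_{N₂}(F_{x̄₀}, F_{x̄₁}) of N₂-equivariant linear isomorphisms from F_{x̄₀} to F_{x̄₁}. -/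
/-! Since `N₂` acts trivially on the base, every exponent `j₃ - j₁` in condition (2) is `1`,
so (2) says exactly that `Ψ` commutes with `ρ g` on each fiber. As `m = 2`, condition (1) says
that `ψ(x̄₁)` is the inverse of `ψ(x̄₀)`. Hence `Ψ` is determined by `f = ψ(x̄₀)`
(`IsClutch.ext_of_eqOn`), and conversely every equivariant isomorphism `f : F 0 → F 1` extends to
the clutching map `glue f` which is `f` on `F 0` and `f⁻¹` on `F 1` (`isClutch_glue`). Evaluation
is the restriction of a continuous linear map of operator spaces, and `f ↦ glue f` is continuous
because inversion is continuous at invertible operators (`continuousAt_glue`). -/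

/-! Setup: a group `N₂` acts on the finite set `x̄ = {x̄_j : j ∈ ℤ/m}`, modelled as a
`MulAction` of `N₂` on `ZMod m`.  An `N₂`-vector bundle `F` over `x̄` is modelled as a
finite-dimensional complex vector space `V` together with a representation
`ρ : N₂ →* End(V)` and a family of submodules `F j ⊆ V` (the fibers) forming an internal
direct sum decomposition of `V` with `ρ g (F j) = F (g • j)`.  A pointwise preclutching
map, i.e. a family of linear isomorphisms `ψ(x̄_j) : F j → F (j+1)`, is modelled as a
single continuous linear map `Ψ : V → V` restricting to a bijection `F j → F (j+1)` on
each fiber.  For `u ∈ F j`, the iterate `ψ^k u` is then just `Ψ^k u`. -/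

noncomputable section
open Function Set

open Clutch

namespace Clutch

section Glue

variable {V : Type*} [NormedAddCommGroup V] [NormedSpace ℂ V] [FiniteDimensional ℂ V]
variable {A B : Submodule ℂ V}

/-- The projection of `V = A ⊕ B` onto `A` along `B`, as a continuous linear map. -/
def projL (h : IsCompl A B) : V →L[ℂ] A := LinearMap.toContinuousLinearMap (A.projectionOnto B h)

lemma projL_left (h : IsCompl A B) (u : A) : projL h (u : V) = u := by
  simp [projL]

lemma projL_right (h : IsCompl A B) (u : B) : projL h (u : V) = 0 := by
  simp [projL]

/-- The endomorphism of `V = A ⊕ B` that is `f` on `A` and `f⁻¹` on `B`. The total operation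
`ContinuousLinearMap.inverse` is used, so the value on `B` is `0` when `f` is not invertible. -/
def glue (h : IsCompl A B) (f : A →L[ℂ] B) : V →L[ℂ] V :=
  B.subtypeL ∘L f ∘L projL h + A.subtypeL ∘L f.inverse ∘L projL h.symm

lemma exists_equiv_of_bijective {f : A →L[ℂ] B} (hf : Bijective f) :
    ∃ e : A ≃L[ℂ] B, (e : A →L[ℂ] B) = f :=
  ⟨(LinearEquiv.ofBijective f.toLinearMap hf).toContinuousLinearEquiv, by ext; rfl⟩

lemma glue_left (h : IsCompl A B) (f : A →L[ℂ] B) (u : A) : glue h f u = f u := by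
  simp [glue, projL_left, projL_right]

lemma glue_right (h : IsCompl A B) {f : A →L[ℂ] B} (hf : Bijective f) (u : A) :
    glue h f (f u) = u := by
  obtain ⟨e, rfl⟩ := exists_equiv_of_bijective hf
  simp [glue, projL_left, projL_right]

lemma continuousAt_glue (h : IsCompl A B) {f : A →L[ℂ] B} (hf : Bijective f) :
    ContinuousAt (glue h) f := by
  obtain ⟨e, rfl⟩ := exists_equiv_of_bijective hf
  have hinv : ContinuousAt (ContinuousLinearMap.inverse : (A →L[ℂ] B) → (B →L[ℂ] A))
      (e : A →L[ℂ] B) :=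
    (contDiffAt_map_inverse (n := 0) e).continuousAt
  unfold glue
  exact (continuousAt_const.clm_comp (continuousAt_id.clm_comp continuousAt_const)).add
    (continuousAt_const.clm_comp (hinv.clm_comp continuousAt_const))

end Glue

lemma eq_zero_or_one (j : ZMod 2) : j = 0 ∨ j = 1 := by
  revert j; decide

lemma isCompl_of_isInternal {V : Type*} [NormedAddCommGroup V] [NormedSpace ℂ V]
    {F : ZMod 2 → Submodule ℂ V} (hF : DirectSum.IsInternal F) : IsCompl (F 0) (F 1) :=
  hF.isCompl (by decide) (by ext j; simpa using eq_zero_or_one j)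

section Fibers

variable {N₂ : Type*} [Group N₂] [MulAction N₂ (ZMod 2)]
variable {V : Type*} [NormedAddCommGroup V] [NormedSpace ℂ V]
variable {ρ : Representation ℂ N₂ V} {F : ZMod 2 → Submodule ℂ V}

/-- For the trivial action on the base, condition (2) is equivariance of `Ψ` on each fiber. -/
lemma isClutch_iff (hρF : ∀ (g : N₂) (j : ZMod 2), (F j).map (ρ g) = F (g • j))
    (htriv : ∀ (g : N₂) (j : ZMod 2), g • j = j) (Ψ : V →L[ℂ] V) :
    IsClutch ρ F Ψ ↔ IsPreclutch F Ψ ∧ (∀ j, ∀ u ∈ F j, Ψ (Ψ u) = u) ∧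
      ∀ (g : N₂) (j : ZMod 2), ∀ u ∈ F j, Ψ (ρ g u) = ρ g (Ψ u) := by
  have hval : ∀ j : ZMod 2, (j + 1 - j).val = 1 := by decide
  have hmem : ∀ (g : N₂) (j : ZMod 2), ∀ u ∈ F j, ρ g u ∈ F j := fun g j u hu ↦ by
    have := hρF g j
    rw [htriv] at this
    exact this ▸ Submodule.mem_map_of_mem hu
  simp only [IsClutch, htriv, hval, pow_one, pow_two, mul_apply_eq_comp]
  refine and_congr_right fun _ ↦ and_congr_right fun _ ↦ ⟨fun H g j u hu ↦ ?_,
    fun H g j u hu ↦ ?_⟩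
  · simpa using H g j (ρ g u) (hmem g j u hu)
  · simpa using H g j (ρ g⁻¹ u) (hmem g⁻¹ j u hu)

/-- A clutching map is determined by its restriction to `F 0`: on `F 1` it is the inverse of that
restriction. -/
lemma IsClutch.ext_of_eqOn (hF : DirectSum.IsInternal F) {Ψ Ψ' : V →L[ℂ] V}
    (hΨ : IsClutch ρ F Ψ) (hΨ' : IsClutch ρ F Ψ') (h : ∀ u ∈ F 0, Ψ u = Ψ' u) : Ψ = Ψ' := by
  have h1 : ∀ v ∈ F 1, Ψ v = Ψ' v := by
    intro v hv
    obtain ⟨u, hu, rfl⟩ := (hΨ.1 0).surjOn (show v ∈ (F (0 + 1) : Set V) by simpa using hv)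
    have e1 := hΨ.2.1 0 u hu
    have e2 := hΨ'.2.1 0 u hu
    rw [pow_two, mul_apply_eq_comp] at e1 e2
    rw [e1, h u hu, e2]
  ext v
  obtain ⟨a, ha, b, hb, rfl⟩ := Submodule.mem_sup.1
    ((isCompl_of_isInternal hF).sup_eq_top ▸ Submodule.mem_top (x := v))
  rw [map_add, map_add, h a ha, h1 b hb]

lemma isClutch_glue [FiniteDimensional ℂ V] (h : IsCompl (F 0) (F 1))
    (hρF : ∀ (g : N₂) (j : ZMod 2), (F j).map (ρ g) = F (g • j))
    (htriv : ∀ (g : N₂) (j : ZMod 2), g • j = j) {f : F 0 →L[ℂ] F 1} (hf : Bijective f)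
    (heq : ∀ (g : N₂) (u w : F 0), (w : V) = ρ g u → ((f w : V) = ρ g (f u))) :
    IsClutch ρ F (glue h f) := by
  have hmem : ∀ (g : N₂), ∀ u ∈ F 0, ρ g u ∈ F 0 := fun g u hu ↦ by
    have := hρF g 0
    rw [htriv] at this
    exact this ▸ Submodule.mem_map_of_mem hu
  have hinvol : ∀ j, ∀ u ∈ F j, glue h f (glue h f u) = u := by
    intro j u hu
    obtain rfl | rfl := eq_zero_or_one j
    · lift u to F 0 using hu
      rw [glue_left, glue_right h hf]
    · lift u to F 1 using hu
      obtain ⟨u, rfl⟩ := hf.2 u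
      rw [glue_right h hf, glue_left]
  have hmaps : ∀ j, MapsTo (glue h f) (F j) (F (j + 1)) := by
    intro j u hu
    obtain rfl | rfl := eq_zero_or_one j
    · lift u to F 0 using hu
      rw [glue_left]
      exact (f u).2
    · lift u to F 1 using hu
      obtain ⟨u, rfl⟩ := hf.2 u
      rw [glue_right h hf]
      exact u.2
  rw [isClutch_iff hρF htriv]
  refine ⟨fun j ↦ ?_, hinvol, fun g j u hu ↦ ?_⟩
  · have hj : j + 1 + 1 = j := by revert j; decide
    refine InvOn.bijOn (f' := glue h f) ⟨hinvol j, hinvol (j + 1)⟩ (hmaps j) ?_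
    simpa only [hj] using hmaps (j + 1)
  · obtain rfl | rfl := eq_zero_or_one j
    · lift u to F 0 using hu
      have := glue_left h f ⟨ρ g u, hmem g u u.2⟩
      rw [glue_left, ← heq g u ⟨ρ g u, hmem g u u.2⟩ rfl]
      exact this
    · lift u to F 1 using hu
      obtain ⟨u, rfl⟩ := hf.2 u
      rw [glue_right h hf, ← heq g u ⟨ρ g u, hmem g u u.2⟩ rfl, glue_right h hf]

end Fibers

end Clutch

/-- Assume Condition F1: `m = 2`, `N₂` fixes both `x̄₀` and `x̄₁`, and
`F x̄₀ ≅ F x̄₁` as `N₂`-representations.  Then the space `𝒜` of equivariant pointwise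
clutching maps is homeomorphic, via the evaluation map `ψ ↦ ψ(x̄₀)`, to the nonempty
space `𝒜⁰ = Iso_{N₂}(F x̄₀, F x̄₁)` of `N₂`-equivariant linear isomorphisms. -/
theorem statement10
    {N₂ : Type*} [Group N₂] [MulAction N₂ (ZMod 2)]
    {V : Type*} [NormedAddCommGroup V] [NormedSpace ℂ V] [FiniteDimensional ℂ V]
    (ρ : Representation ℂ N₂ V) (F : ZMod 2 → Submodule ℂ V)
    (hF : DirectSum.IsInternal F)
    (hρF : ∀ (g : N₂) (j : ZMod 2), (F j).map (ρ g) = F (g • j))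
    (htriv : ∀ (g : N₂) (j : ZMod 2), g • j = j)
    (hiso : ∃ f : ↥(F 0) →L[ℂ] ↥(F 1), Function.Bijective f ∧
      ∀ (g : N₂) (u w : ↥(F 0)), (w : V) = ρ g u → ((f w : V) = ρ g (f u))) :
    Nonempty {f : ↥(F 0) →L[ℂ] ↥(F 1) // Function.Bijective f ∧
      ∀ (g : N₂) (u w : ↥(F 0)), (w : V) = ρ g u → ((f w : V) = ρ g (f u))} ∧
    ∃ e : {Ψ : V →L[ℂ] V // IsClutch ρ F Ψ} ≃ₜ
        {f : ↥(F 0) →L[ℂ] ↥(F 1) // Function.Bijective f ∧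
          ∀ (g : N₂) (u w : ↥(F 0)), (w : V) = ρ g u → ((f w : V) = ρ g (f u))},
      ∀ (Ψ : {Ψ : V →L[ℂ] V // IsClutch ρ F Ψ}) (u : ↥(F 0)),
        ((e Ψ).1 u : V) = Ψ.1 u := by
  have h := isCompl_of_isInternal hF
  have hval : ∀ Ψ : {Ψ : V →L[ℂ] V // IsClutch ρ F Ψ}, ∀ u : F 0,
      (((projL h.symm ∘L Ψ.1 ∘L (F 0).subtypeL) u : F 1) : V) = Ψ.1 u := fun Ψ u ↦
    congrArg Subtype.val (projL_left h.symm
      ⟨Ψ.1 u, show Ψ.1 u ∈ F 1 by simpa using (Ψ.2.1 0).mapsTo u.2⟩)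
  have hbij : ∀ Ψ : {Ψ : V →L[ℂ] V // IsClutch ρ F Ψ},
      Bijective (projL h.symm ∘L Ψ.1 ∘L (F 0).subtypeL) := by
    refine fun Ψ ↦ ⟨fun u v huv ↦ ?_, fun v ↦ ?_⟩
    · have huv' := congrArg Subtype.val huv
      rw [hval, hval] at huv'
      exact Subtype.ext ((Ψ.2.1 0).injOn u.2 v.2 huv')
    · obtain ⟨u, hu, huv⟩ := (Ψ.2.1 0).surjOn (show (v : V) ∈ (F (0 + 1) : Set V) by simp)
      exact ⟨⟨u, hu⟩, Subtype.ext ((hval Ψ ⟨u, hu⟩).trans huv)⟩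
  have hequiv : ∀ (Ψ : {Ψ : V →L[ℂ] V // IsClutch ρ F Ψ}) (g : N₂) (u w : F 0),
      (w : V) = ρ g u → (((projL h.symm ∘L Ψ.1 ∘L (F 0).subtypeL) w : F 1) : V)
        = ρ g ((projL h.symm ∘L Ψ.1 ∘L (F 0).subtypeL) u) := by
    intro Ψ g u w hw
    rw [hval, hval, hw]
    exact ((isClutch_iff hρF htriv _).1 Ψ.2).2.2 g 0 u u.2
  refine ⟨hiso.elim fun f hf ↦ ⟨⟨f, hf⟩⟩, ⟨⟨⟨fun Ψ ↦
    ⟨projL h.symm ∘L Ψ.1 ∘L (F 0).subtypeL, hbij Ψ, hequiv Ψ⟩,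
    fun f ↦ ⟨glue h f.1, isClutch_glue h hρF htriv f.2.1 f.2.2⟩, fun Ψ ↦ ?_, fun f ↦ ?_⟩,
    ?_, ?_⟩, hval⟩⟩
  · exact Subtype.ext (IsClutch.ext_of_eqOn hF
      (isClutch_glue h hρF htriv (hbij Ψ) (hequiv Ψ)) Ψ.2
      fun u hu ↦ (glue_left h _ ⟨u, hu⟩).trans (hval Ψ ⟨u, hu⟩))
  · ext u
    simp [glue_left, projL_left]
  · exact (continuous_const.clm_comp
      (continuous_subtype_val.clm_comp continuous_const)).subtype_mk _
  · exact (continuous_iff_continuousAt.2 fun f ↦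
      (continuousAt_glue h f.2.1).comp continuous_subtype_val.continuousAt).subtype_mk _
end
end

section
/- Assume F satisfies Condition F2 (N₂ acts transitively on x̄, m ≥ 2), and for each j ∈ ℤ/m fix g_j ∈ N₂ with g_j·x̄_j = x̄₀; for a pointwise preclutching map ψ, set ψ_g = (g_{j+1} ∘ ψ(x̄_j) ∘ g_j^{-1})_{j∈ℤ/m}, an m-tuple of linear automorphisms of F_{x̄₀}. Then: (1) for every equivariant pointwise clutching map ψ and every B ∈ Iso_{N₁}(F_{x̄₀}), the pointwise preclutching map ψ′ defined by ψ′(x̄_j) = g_{j+1}^{-1} B g_{j+1} ∘ ψ(x̄_j) ∘ g_j^{-1} B^{-1} g_j is again an equivariant pointwise clutching map (and it satisfies B ψ_g B^{-1} = ψ′_g componentwise); (2) for two equivariant pointwise clutching maps ψ, ψ′, the N₂-representations F/ψ and F/ψ′ are isomorphic if and only if there exists B ∈ Iso_{N₁}(F_{x̄₀}) with B ψ_g B^{-1} = ψ′_g componentwise. -/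
/-!
Both parts rest on one dictionary: an `N₁`-equivariant automorphism `B` of `F x̄₀` is the same
thing as an `N₂`-equivariant, fiber-preserving automorphism `Φ` of the whole bundle, namely
`Φ = g_j⁻¹ B g_j` on `F j` (`bundleMap_comm`).

* Part (1): the map `ψ'` is the conjugate `Φ ψ Φ⁻¹`, and being an equivariant clutching map is
  invariant under such conjugation (`isClutch_conj`).
* Part (2), from `B` to an isomorphism: `Φ ψ = ψ' Φ`, so `Φ` descends to the quotients.
* Part (2), from an isomorphism `θ` to `B`: since `ψ^m = 1`, the map `u ↦ ψ^(-j) u` on `F j` is a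
  projection of `V` onto `F x̄₀` with kernel the span of all `u - ψ u` (`exists_retraction`), so
  `F x̄₀ ≅ F/ψ`, and `θ` becomes an automorphism `B` of `F x̄₀`.  The span is `N₂`-stable by
  condition (2) on clutching maps (`clutchSub_stable`), so in `F/ψ` the class of
  `g_{j+1} ψ(x̄_j) g_j⁻¹ u` is that of `g_{j+1} g_j⁻¹ u`.  Hence the equivariance of `θ` gives
  `B ψ_g B⁻¹ = ψ'_g`.
-/

/-! Setup: a group `N₂` acts on the finite set `x̄ = {x̄_j : j ∈ ℤ/m}`, modelled as a
`MulAction` of `N₂` on `ZMod m`.  An `N₂`-vector bundle `F` over `x̄` is modelled as a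
finite-dimensional complex vector space `V` together with a representation
`ρ : N₂ →* End(V)` and a family of submodules `F j ⊆ V` (the fibers) forming an internal
direct sum decomposition of `V` with `ρ g (F j) = F (g • j)`.  A pointwise preclutching
map, i.e. a family of linear isomorphisms `ψ(x̄_j) : F j → F (j+1)`, is modelled as a
single continuous linear map `Ψ : V → V` restricting to a bijection `F j → F (j+1)` on
each fiber.  For `u ∈ F j`, the iterate `ψ^k u` is then just `Ψ^k u`. -/

noncomputable section
open Function Set

open Clutch

namespace Clutch

section Gluing

variable {ι : Type*} [DecidableEq ι] {V : Type*} [AddCommGroup V] [Module ℂ V]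

theorem exists_glue {F : ι → Submodule ℂ V} (hF : DirectSum.IsInternal F)
    (T : ι → V →ₗ[ℂ] V) : ∃ S : V →ₗ[ℂ] V, ∀ j, ∀ u ∈ F j, S u = T j u := by
  let e := LinearEquiv.ofBijective (DirectSum.coeLinearMap F) hF
  refine ⟨(DirectSum.toModule ℂ ι V fun j => T j ∘ₗ (F j).subtype) ∘ₗ e.symm.toLinearMap, ?_⟩
  intro j u hu
  have h : e.symm u = DirectSum.lof ℂ ι (fun j => F j) j ⟨u, hu⟩ := by
    rw [LinearEquiv.symm_apply_eq]
    exact (DirectSum.coeLinearMap_lof F j ⟨u, hu⟩).symm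
  simp [h]

theorem ext_fiber {W : Type*} [AddCommGroup W] [Module ℂ W] {F : ι → Submodule ℂ V}
    (hF : DirectSum.IsInternal F) {S T : V →ₗ[ℂ] W} (h : ∀ j, ∀ u ∈ F j, S u = T u) (v : V) :
    S v = T v := by
  have hv : v ∈ ⨆ j, F j := by rw [hF.submodule_iSup_eq_top]; trivial
  induction hv using Submodule.iSup_induction' with
  | mem j u hu => exact h j u hu
  | zero => simp
  | add x y _ _ hx hy => simp [hx, hy]

end Gluing

variable {m : ℕ} {N₂ : Type*} [Group N₂] [MulAction N₂ (ZMod m)]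
variable {V : Type*} [NormedAddCommGroup V] [NormedSpace ℂ V]
variable {ρ : Representation ℂ N₂ V} {F : ZMod m → Submodule ℂ V} {Ψ Ψ' : V →L[ℂ] V}

theorem rho_mem (hρF : ∀ (g : N₂) (j : ZMod m), (F j).map (ρ g) = F (g • j)) (h : N₂)
    {j k : ZMod m} (hk : h • j = k) {u : V} (hu : u ∈ F j) : ρ h u ∈ F k := by
  rw [← hk, ← hρF]
  exact Submodule.mem_map_of_mem hu

theorem pow_mem (hΨ : IsPreclutch F Ψ) (k : ℕ) {j : ZMod m} {u : V} (hu : u ∈ F j) :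
    (Ψ ^ k) u ∈ F (j + k) := by
  induction k with
  | zero => simpa using hu
  | succ k ih =>
    rw [pow_succ', Nat.cast_succ, ← add_assoc]
    exact (hΨ (j + k)).mapsTo ih

theorem sub_apply_mem (Ψ : V →L[ℂ] V) {j : ZMod m} {u : V} (hu : u ∈ F j) :
    u - Ψ u ∈ clutchSub F Ψ :=
  Submodule.subset_span ⟨j, u, hu, rfl⟩

theorem sub_pow_mem (hΨ : IsPreclutch F Ψ) (k : ℕ) {j : ZMod m} {u : V} (hu : u ∈ F j) :
    u - (Ψ ^ k) u ∈ clutchSub F Ψ := by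
  induction k with
  | zero => simp
  | succ k ih =>
    have h := add_mem ih (sub_apply_mem Ψ (pow_mem hΨ k hu))
    rw [pow_succ']
    simpa using h

theorem clutchSub_le {S : Submodule ℂ V} (h : ∀ j, ∀ u ∈ F j, u - Ψ u ∈ S) :
    clutchSub F Ψ ≤ S := by
  refine Submodule.span_le.2 ?_
  rintro _ ⟨j, u, hu, rfl⟩
  exact h j u hu

/-- The subspace defining `F/ψ` is `N₂`-stable: `h (u - ψ u) = h u - ψ^k (h u)` for the exponent `k`
supplied by the equivariance of `ψ`. -/
theorem clutchSub_stable (hρF : ∀ (g : N₂) (j : ZMod m), (F j).map (ρ g) = F (g • j))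
    (hΨ : IsClutch ρ F Ψ) (h : N₂) {v : V} (hv : v ∈ clutchSub F Ψ) :
    ρ h v ∈ clutchSub F Ψ := by
  suffices H : clutchSub F Ψ ≤ (clutchSub F Ψ).comap (ρ h) from H hv
  refine clutchSub_le fun j u hu => ?_
  have hu' := rho_mem hρF h rfl hu
  have e := hΨ.2.2 h (h • j) _ hu'
  rw [Representation.inv_self_apply] at e
  rw [Submodule.mem_comap, map_sub, ← e]
  exact sub_pow_mem hΨ.1 _ hu'

/-- A projection of `V` onto `F x̄₀` with kernel `clutchSub F Ψ`, given on `F j` by `ψ^(-j)`. -/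
theorem exists_retraction [NeZero m] (hF : DirectSum.IsInternal F) (hΨ : IsClutch ρ F Ψ) :
    ∃ π : V →ₗ[ℂ] V, (∀ v, π v ∈ F 0) ∧ (∀ u ∈ F 0, π u = u) ∧
      (∀ v, v - π v ∈ clutchSub F Ψ) ∧ clutchSub F Ψ ≤ LinearMap.ker π := by
  obtain ⟨π, hπ⟩ := exists_glue hF fun j => ((Ψ ^ (-j : ZMod m).val : V →L[ℂ] V) : V →ₗ[ℂ] V)
  have hπ' : ∀ j, ∀ u ∈ F j, π u = (Ψ ^ (-j : ZMod m).val) u := hπ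
  have hm1 : Ψ ^ m = 1 :=
    ContinuousLinearMap.ext fun v =>
      ext_fiber hF (S := ((Ψ ^ m : V →L[ℂ] V) : V →ₗ[ℂ] V)) (T := LinearMap.id) hΨ.2.1 v
  refine ⟨π, fun v => ?_, fun u hu => ?_, fun v => ?_, clutchSub_le fun j u hu => ?_⟩
  · have h := ext_fiber hF (S := (F 0).mkQ ∘ₗ π) (T := 0) (fun j u hu => ?_) v
    · simpa using h
    · have h := pow_mem hΨ.1 (-j : ZMod m).val hu
      rw [← hπ' j u hu, ZMod.natCast_zmod_val, add_neg_cancel] at h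
      simpa using h
  · simp [hπ' 0 u hu]
  · have h := ext_fiber hF (S := (clutchSub F Ψ).mkQ ∘ₗ (LinearMap.id - π)) (T := 0)
      (fun j u hu => ?_) v
    · simpa [← Submodule.Quotient.mk_sub] using h
    · have h := sub_pow_mem hΨ.1 (-j : ZMod m).val hu
      rw [← hπ' j u hu] at h
      simpa [← Submodule.Quotient.mk_sub] using h
  · have hΨu := (hΨ.1 j).mapsTo hu
    -- The exponents `(-(j + 1)) + 1` and `-j` only agree modulo `m`.
    have hexp : Ψ ^ ((-(j + 1) : ZMod m).val + 1) = Ψ ^ (-j : ZMod m).val := by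
      have hmod : ((-(j + 1) : ZMod m).val + 1) ≡ (-j : ZMod m).val [MOD m] := by
        rw [← ZMod.natCast_eq_natCast_iff]
        push_cast
        simp
      exact pow_eq_pow_of_modEq hmod hm1
    rw [LinearMap.mem_ker, map_sub, hπ' j u hu, hπ' (j + 1) _ hΨu, ← hexp, pow_succ]
    simp

/-- The extension of an `N₁`-equivariant map `B` of `F x̄₀` to the bundle is `N₂`-equivariant. -/
theorem bundleMap_comm (hF : DirectSum.IsInternal F)
    (hρF : ∀ (g : N₂) (j : ZMod m), (F j).map (ρ g) = F (g • j))
    {g : ZMod m → N₂} (hg : ∀ j, g j • j = 0) {B : V →L[ℂ] V}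
    (hB : ∀ g' ∈ MulAction.stabilizer N₂ (0 : ZMod m), ∀ u ∈ F 0, B (ρ g' u) = ρ g' (B u))
    {Φ : V →ₗ[ℂ] V} (hΦ : ∀ j, ∀ u ∈ F j, Φ u = ρ (g j)⁻¹ (B (ρ (g j) u))) (h : N₂) (v : V) :
    Φ (ρ h v) = ρ h (Φ v) := by
  refine ext_fiber hF (S := Φ ∘ₗ ρ h) (T := ρ h ∘ₗ Φ) (fun j u hu => ?_) v
  have hj : (g j)⁻¹ • (0 : ZMod m) = j := by rw [inv_smul_eq_iff, hg]
  -- `g_{hj} h g_j⁻¹` fixes `x̄₀`, so `B` commutes with it.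
  have hs : g (h • j) * h * (g j)⁻¹ ∈ MulAction.stabilizer N₂ (0 : ZMod m) := by
    rw [MulAction.mem_stabilizer_iff, mul_smul, mul_smul, hj, hg]
  have e := hB _ hs _ (rho_mem hρF (g j) (hg j) hu)
  simp only [map_mul, Module.End.mul_apply, Representation.inv_self_apply] at e
  rw [LinearMap.comp_apply, LinearMap.comp_apply, hΦ j u hu,
    hΦ (h • j) _ (rho_mem hρF h rfl hu), e, Representation.inv_self_apply]

theorem bundleMap_mem (hρF : ∀ (g : N₂) (j : ZMod m), (F j).map (ρ g) = F (g • j))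
    {g : ZMod m → N₂} (hg : ∀ j, g j • j = 0) {B : V →L[ℂ] V}
    (hB : Set.MapsTo B (F 0) (F 0))
    {Φ : V →ₗ[ℂ] V} (hΦ : ∀ j, ∀ u ∈ F j, Φ u = ρ (g j)⁻¹ (B (ρ (g j) u)))
    (j : ZMod m) (u : V) (hu : u ∈ F j) : Φ u ∈ F j := by
  rw [hΦ j u hu]
  refine rho_mem hρF _ ?_ (hB (rho_mem hρF (g j) (hg j) hu))
  rw [inv_smul_eq_iff, hg]

theorem bundleMap_inv (hF : DirectSum.IsInternal F)
    (hρF : ∀ (g : N₂) (j : ZMod m), (F j).map (ρ g) = F (g • j))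
    {g : ZMod m → N₂} (hg : ∀ j, g j • j = 0) {B C : V →L[ℂ] V}
    (hB : Set.MapsTo B (F 0) (F 0)) (hCB : ∀ u ∈ F 0, C (B u) = u)
    {Φ Γ : V →ₗ[ℂ] V} (hΦ : ∀ j, ∀ u ∈ F j, Φ u = ρ (g j)⁻¹ (B (ρ (g j) u)))
    (hΓ : ∀ j, ∀ u ∈ F j, Γ u = ρ (g j)⁻¹ (C (ρ (g j) u))) (v : V) :
    Γ (Φ v) = v := by
  refine ext_fiber hF (S := Γ ∘ₗ Φ) (T := LinearMap.id) (fun j u hu => ?_) v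
  rw [LinearMap.comp_apply, hΓ j _ (bundleMap_mem hρF hg hB hΦ j u hu), hΦ j u hu,
    Representation.self_inv_apply, hCB _ (rho_mem hρF (g j) (hg j) hu),
    Representation.inv_self_apply, LinearMap.id_apply]

/-- A conjugate `Φ ψ Φ⁻¹` of an equivariant clutching map by an `N₂`-equivariant bundle automorphism
is an equivariant clutching map. -/
theorem isClutch_conj (hρF : ∀ (g : N₂) (j : ZMod m), (F j).map (ρ g) = F (g • j))
    (hΨ : IsClutch ρ F Ψ) {Φ Γ : V →ₗ[ℂ] V}
    (hΓΦ : ∀ v, Γ (Φ v) = v) (hΦΓ : ∀ v, Φ (Γ v) = v)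
    (hΦ : ∀ j, ∀ u ∈ F j, Φ u ∈ F j) (hΓ : ∀ j, ∀ u ∈ F j, Γ u ∈ F j)
    (hc : ∀ (h : N₂) (v : V), Φ (ρ h v) = ρ h (Φ v))
    (hΨ' : ∀ j, ∀ u ∈ F j, Ψ' u = Φ (Ψ (Γ u))) : IsClutch ρ F Ψ' := by
  have hc' : ∀ (h : N₂) (v : V), Γ (ρ h v) = ρ h (Γ v) := fun h v => by
    rw [← hΓΦ (ρ h (Γ v)), hc, hΦΓ]
  have hpow : ∀ (k : ℕ) (j : ZMod m), ∀ u ∈ F j, (Ψ' ^ k) u = Φ ((Ψ ^ k) (Γ u)) := by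
    intro k j u hu
    induction k with
    | zero => simp [hΦΓ]
    | succ k ih =>
      rw [pow_succ', pow_succ', mul_apply_eq_comp, ih,
        hΨ' _ _ (hΦ _ _ (pow_mem hΨ.1 k (hΓ j u hu))), hΓΦ]
      rfl
  refine ⟨fun j => ?_, fun j u hu => ?_, fun h j u hu => ?_⟩
  · have b1 : Set.BijOn Γ (F j) (F j) :=
      ⟨hΓ j, (Function.LeftInverse.injective hΦΓ).injOn, fun u hu => ⟨Φ u, hΦ j u hu, hΓΦ u⟩⟩
    have b2 : Set.BijOn Φ (F (j + 1)) (F (j + 1)) :=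
      ⟨hΦ _, (Function.LeftInverse.injective hΓΦ).injOn, fun u hu => ⟨Γ u, hΓ _ u hu, hΦΓ u⟩⟩
    exact ((b2.comp (hΨ.1 j)).comp b1).congr fun u hu => (hΨ' j u hu).symm
  · rw [hpow m j u hu, hΨ.2.1 j _ (hΓ j u hu), hΦΓ]
  · rw [hpow _ j u hu, hΨ.2.2 h j _ (hΓ j u hu), hc,
      hΨ' (h⁻¹ • j) _ (rho_mem hρF _ rfl hu), hc']

/-- A bundle automorphism intertwining `ψ` and `ψ'` carries one defining subspace into the other. -/
theorem clutchSub_map {Φ : V →ₗ[ℂ] V} (hΦ : ∀ j, ∀ u ∈ F j, Φ u ∈ F j)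
    (hΦΨ : ∀ j, ∀ u ∈ F j, Φ (Ψ u) = Ψ' (Φ u)) :
    clutchSub F Ψ ≤ (clutchSub F Ψ').comap Φ :=
  clutchSub_le fun j u hu => by
    rw [Submodule.mem_comap, map_sub, hΦΨ j u hu]
    exact sub_apply_mem Ψ' (hΦ j u hu)

theorem quotIso_of_intertwine (hρF : ∀ (g : N₂) (j : ZMod m), (F j).map (ρ g) = F (g • j))
    (hc' : IsClutch ρ F Ψ') {Φ Γ : V →ₗ[ℂ] V}
    (hΓΦ : ∀ v, Γ (Φ v) = v) (hΦΓ : ∀ v, Φ (Γ v) = v)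
    (hΦ : ∀ j, ∀ u ∈ F j, Φ u ∈ F j) (hΓ : ∀ j, ∀ u ∈ F j, Γ u ∈ F j)
    (hc : ∀ (h : N₂) (v : V), Φ (ρ h v) = ρ h (Φ v))
    (hΦΨ : ∀ j, ∀ u ∈ F j, Φ (Ψ u) = Ψ' (Φ u)) : QuotIso ρ F Ψ Ψ' := by
  have hΓΨ : ∀ j, ∀ u ∈ F j, Γ (Ψ' u) = Ψ (Γ u) := fun j u hu => by
    rw [← hΓΦ (Ψ (Γ u)), hΦΨ j _ (hΓ j u hu), hΦΓ]
  have h1 := clutchSub_map hΦ hΦΨ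
  have h2 := clutchSub_map hΓ hΓΨ
  refine ⟨(clutchSub F Ψ).mapQ (clutchSub F Ψ') Φ h1, ?_, fun h v w hvw => ?_⟩
  · refine Function.bijective_iff_has_inverse.2
      ⟨(clutchSub F Ψ').mapQ (clutchSub F Ψ) Γ h2, fun x => ?_, fun x => ?_⟩
    · obtain ⟨v, rfl⟩ := Submodule.mkQ_surjective _ x
      simp [hΓΦ]
    · obtain ⟨v, rfl⟩ := Submodule.mkQ_surjective _ x
      simp [hΦΓ]
  · simp only [Submodule.mkQ_apply, Submodule.mapQ_apply, Submodule.Quotient.eq] at hvw ⊢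
    rw [hc, ← map_sub]
    exact clutchSub_stable hρF hc' h hvw

end Clutch

/-- Assume Condition F2 (`N₂` acts transitively on `x̄`, `m ≥ 2`) and
fix `g_j ∈ N₂` with `g_j • x̄_j = x̄₀`.  Then:
(1) for every equivariant pointwise clutching map `ψ` and every `N₁`-equivariant linear
automorphism `B` of `F x̄₀` (with inverse `C` on `F x̄₀`), the pointwise preclutching map
`ψ'` defined by `ψ'(x̄_j) = g_{j+1}⁻¹ B g_{j+1} ∘ ψ(x̄_j) ∘ g_j⁻¹ B⁻¹ g_j` is again an
equivariant pointwise clutching map, and it satisfies `B ψ_g B⁻¹ = ψ'_g`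
componentwise (where `(ψ_g)_j = g_{j+1} ∘ ψ(x̄_j) ∘ g_j⁻¹` is an automorphism of `F x̄₀`);
(2) for two equivariant pointwise clutching maps `ψ, ψ'`, the `N₂`-representations `F/ψ`
and `F/ψ'` are isomorphic iff there is such a `B` with `B ψ_g B⁻¹ = ψ'_g`
componentwise. -/
theorem statement11 {m : ℕ} [NeZero m] (hm : 2 ≤ m)
    {N₂ : Type*} [Group N₂] [MulAction N₂ (ZMod m)]
    {V : Type*} [NormedAddCommGroup V] [NormedSpace ℂ V] [FiniteDimensional ℂ V]
    (ρ : Representation ℂ N₂ V) (F : ZMod m → Submodule ℂ V)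
    (hF : DirectSum.IsInternal F)
    (hρF : ∀ (g : N₂) (j : ZMod m), (F j).map (ρ g) = F (g • j))
    (htrans : MulAction.IsPretransitive N₂ (ZMod m))
    (g : ZMod m → N₂) (hg : ∀ j : ZMod m, g j • j = 0) :
    (∀ Ψ : V →L[ℂ] V, IsClutch ρ F Ψ →
      ∀ B C : V →L[ℂ] V,
        Set.MapsTo B (F (0 : ZMod m)) (F (0 : ZMod m)) →
        Set.MapsTo C (F (0 : ZMod m)) (F (0 : ZMod m)) →
        (∀ u ∈ F (0 : ZMod m), C (B u) = u) →
        (∀ u ∈ F (0 : ZMod m), B (C u) = u) →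
        (∀ g' ∈ MulAction.stabilizer N₂ (0 : ZMod m), ∀ u ∈ F (0 : ZMod m),
          B (ρ g' u) = ρ g' (B u)) →
        ∀ Ψ' : V →L[ℂ] V,
          (∀ j : ZMod m, ∀ u ∈ F j,
            Ψ' u =
              ρ (g (j + 1))⁻¹ (B (ρ (g (j + 1)) (Ψ (ρ (g j)⁻¹ (C (ρ (g j) u))))))) →
          IsClutch ρ F Ψ' ∧
          ∀ j : ZMod m, ∀ u ∈ F (0 : ZMod m),
            B (ρ (g (j + 1)) (Ψ (ρ (g j)⁻¹ (C u)))) =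
              ρ (g (j + 1)) (Ψ' (ρ (g j)⁻¹ u))) ∧
    (∀ Ψ Ψ' : V →L[ℂ] V, IsClutch ρ F Ψ → IsClutch ρ F Ψ' →
      (QuotIso ρ F Ψ Ψ' ↔
        ∃ B C : V →L[ℂ] V,
          Set.MapsTo B (F (0 : ZMod m)) (F (0 : ZMod m)) ∧
          Set.MapsTo C (F (0 : ZMod m)) (F (0 : ZMod m)) ∧
          (∀ u ∈ F (0 : ZMod m), C (B u) = u) ∧
          (∀ u ∈ F (0 : ZMod m), B (C u) = u) ∧
          (∀ g' ∈ MulAction.stabilizer N₂ (0 : ZMod m), ∀ u ∈ F (0 : ZMod m),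
            B (ρ g' u) = ρ g' (B u)) ∧
          ∀ j : ZMod m, ∀ u ∈ F (0 : ZMod m),
            B (ρ (g (j + 1)) (Ψ (ρ (g j)⁻¹ (C u)))) =
              ρ (g (j + 1)) (Ψ' (ρ (g j)⁻¹ u)))) := by
  have hg' : ∀ j, (g j)⁻¹ • (0 : ZMod m) = j := fun j => by rw [inv_smul_eq_iff, hg]
  have glue : ∀ B : V →L[ℂ] V, ∃ Φ : V →ₗ[ℂ] V,
      ∀ j, ∀ u ∈ F j, Φ u = ρ (g j)⁻¹ (B (ρ (g j) u)) := fun B =>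
    exists_glue hF fun j => ρ (g j)⁻¹ ∘ₗ (B : V →ₗ[ℂ] V) ∘ₗ ρ (g j)
  refine ⟨fun Ψ hΨ B C hB hC hCB hBC hBeq Ψ' hΨ' => ⟨?_, fun j u hu => ?_⟩,
    fun Ψ Ψ' hΨ hΨ' => ⟨?_, ?_⟩⟩
  · obtain ⟨Φ, hΦ⟩ := glue B
    obtain ⟨Γ, hΓ⟩ := glue C
    have hΓm := bundleMap_mem hρF hg hC hΓ
    refine isClutch_conj hρF hΨ (bundleMap_inv hF hρF hg hB hCB hΦ hΓ)
      (bundleMap_inv hF hρF hg hC hBC hΓ hΦ) (bundleMap_mem hρF hg hB hΦ) hΓm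
      (bundleMap_comm hF hρF hg hBeq hΦ) fun j u hu => ?_
    rw [hΨ' j u hu, hΦ (j + 1) _ ((hΨ.1 j).mapsTo (hΓm j u hu)), hΓ j u hu]
  · rw [hΨ' j _ (rho_mem hρF _ (hg' j) hu), Representation.self_inv_apply,
      Representation.self_inv_apply]
  · rintro ⟨θ, hθ, hθρ⟩
    obtain ⟨π, hπ0, hπid, hπsub, hπker⟩ := exists_retraction hF hΨ
    obtain ⟨π', hπ0', hπid', hπsub', hπker'⟩ := exists_retraction hF hΨ'
    let e := LinearEquiv.ofBijective θ hθ
    -- `B` and `C` are `θ` and `θ⁻¹` read through `F x̄₀ ≅ F/ψ` and `F x̄₀ ≅ F/ψ'`.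
    let B : V →ₗ[ℂ] V := (clutchSub F Ψ').liftQ π' hπker' ∘ₗ θ ∘ₗ (clutchSub F Ψ).mkQ
    let C : V →ₗ[ℂ] V :=
      (clutchSub F Ψ).liftQ π hπker ∘ₗ e.symm.toLinearMap ∘ₗ (clutchSub F Ψ').mkQ
    have hBapp : ∀ v w, θ ((clutchSub F Ψ).mkQ v) = (clutchSub F Ψ').mkQ w → B v = π' w := by
      intro v w h
      simp only [B, LinearMap.comp_apply, h]
      simp
    have hCapp : ∀ v w, θ ((clutchSub F Ψ).mkQ v) = (clutchSub F Ψ').mkQ w → C w = π v := by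
      intro v w h
      have h' : e.symm ((clutchSub F Ψ').mkQ w) = (clutchSub F Ψ).mkQ v := by
        rw [LinearEquiv.symm_apply_eq, ← h]; rfl
      simp only [C, LinearMap.comp_apply, LinearEquiv.coe_coe, h']
      simp
    have hmk : ∀ v, (clutchSub F Ψ).mkQ (π v) = (clutchSub F Ψ).mkQ v := fun v =>
      ((Submodule.Quotient.eq _).2 (hπsub v)).symm
    have hmk' : ∀ v, (clutchSub F Ψ').mkQ (π' v) = (clutchSub F Ψ').mkQ v := fun v =>
      ((Submodule.Quotient.eq _).2 (hπsub' v)).symm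
    have hBθ : ∀ v, θ ((clutchSub F Ψ).mkQ v) = (clutchSub F Ψ').mkQ (B v) := fun v => by
      obtain ⟨w, hw⟩ := Submodule.mkQ_surjective _ (θ ((clutchSub F Ψ).mkQ v))
      rw [hBapp v w hw.symm, hmk', hw]
    have hCθ : ∀ w, θ ((clutchSub F Ψ).mkQ (C w)) = (clutchSub F Ψ').mkQ w := fun w => by
      obtain ⟨x, hx⟩ := hθ.2 ((clutchSub F Ψ').mkQ w)
      obtain ⟨v, rfl⟩ := Submodule.mkQ_surjective _ x
      rw [hCapp v w hx, hmk, hx]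
    have hB0 : ∀ v, B v ∈ F 0 := fun v => by
      obtain ⟨w, hw⟩ := Submodule.mkQ_surjective _ (θ ((clutchSub F Ψ).mkQ v))
      rw [hBapp v w hw.symm]; exact hπ0' _
    have hC0 : ∀ v, C v ∈ F 0 := fun v => by
      rw [hCapp (C v) v (hCθ v)]; exact hπ0 _
    refine ⟨LinearMap.toContinuousLinearMap B, LinearMap.toContinuousLinearMap C, ?_⟩
    simp only [LinearMap.coe_toContinuousLinearMap']
    refine ⟨fun v _ => hB0 v, fun v _ => hC0 v,
      fun u hu => (hCapp u _ (hBθ u)).trans (hπid u hu),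
      fun u hu => (hBapp _ u (hCθ u)).trans (hπid' u hu), fun h hh u hu => ?_, fun j u hu => ?_⟩
    · rw [hBapp _ _ (hθρ h _ _ (hBθ u))]
      exact hπid' _ (rho_mem hρF h hh (hB0 u))
    ·
      -- Modulo the defining subspace, `ψ` acts as the identity on each fiber.
      have key : ∀ {Ω : V →L[ℂ] V}, IsClutch ρ F Ω → ∀ x ∈ F 0,
          (clutchSub F Ω).mkQ (ρ (g (j + 1)) (Ω (ρ (g j)⁻¹ x))) =
            (clutchSub F Ω).mkQ (ρ (g (j + 1)) (ρ (g j)⁻¹ x)) := by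
        intro Ω hΩ x hx
        refine ((Submodule.Quotient.eq _).2 ?_).symm
        rw [← map_sub]
        exact clutchSub_stable hρF hΩ _ (sub_apply_mem Ω (rho_mem hρF _ (hg' j) hx))
      rw [hBapp _ (ρ (g (j + 1)) (Ψ' (ρ (g j)⁻¹ u)))]
      · exact hπid' _ (rho_mem hρF _ (hg _) ((hΨ'.1 j).mapsTo (rho_mem hρF _ (hg' j) hu)))
      · rw [key hΨ _ (hC0 u), key hΨ' u hu]
        exact hθρ _ _ _ (hθρ _ _ _ (hCθ u))
  · rintro ⟨B, C, hB, hC, hCB, hBC, hBeq, hconj⟩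
    obtain ⟨Φ, hΦ⟩ := glue B
    obtain ⟨Γ, hΓ⟩ := glue C
    refine quotIso_of_intertwine hρF hΨ' (bundleMap_inv hF hρF hg hB hCB hΦ hΓ)
      (bundleMap_inv hF hρF hg hC hBC hΓ hΦ) (bundleMap_mem hρF hg hB hΦ)
      (bundleMap_mem hρF hg hC hΓ) (bundleMap_comm hF hρF hg hBeq hΦ) fun j u hu => ?_
    have hu0 := rho_mem hρF (g j) (hg j) hu
    have h := hconj j _ (hB hu0)
    rw [hCB _ hu0, Representation.inv_self_apply] at h
    rw [hΦ (j + 1) _ ((hΨ.1 j).mapsTo hu), h, Representation.inv_self_apply, hΦ j u hu]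
end
end
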